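/- Let Λ = KQ/⟨all paths of length L+1⟩ be a truncated path algebra over an algebraically closed field and d a dimension vector. Then: (1) the map Γ_• : Rep_d(Λ) → ℕ, x ↦ Γ(M_x), is upper semicontinuous (the set {x : Γ(M_x) ≥ m} is closed for every m); and (2) for a realizable semisimple sequence S of dimension vector d, the following are equivalent: (i) the closure of Rep S is an irreducible component of Rep_d(Λ); (ii) there exists x ∈ Rep S with Γ(M_x) = 1; (iii) there exists a module G with radical layering S such that the radical filtration G ⊇ JG ⊇ ⋯ ⊇ J^{L+1}G = 0 is the only submodule filtration of G governed by a realizable semisimple sequence. -/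

import Mathlib

open Finset

/-! # Varieties of representations of a quiver with relations: basic setup -/

/-- The Zariski topology on the affine space `ι → K`: it is generated by the basic open
sets `D(p) = {x | p(x) ≠ 0}`, where `p` ranges over multivariate polynomials. -/
def zariskiTopology (ι K : Type) [CommSemiring K] : TopologicalSpace (ι → K) :=
  TopologicalSpace.generateFrom
    {U | ∃ p : MvPolynomial ι K, U = {x | MvPolynomial.eval x p ≠ 0}}

/-- A finite quiver `Q`: vertices `Fin n`, arrows `Fin numArrows` with source and
target maps. -/
structure QuiverData where
  n : ℕ
  numArrows : ℕ
  src : Fin numArrows → Fin n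
  tgt : Fin numArrows → Fin n

namespace QuiverData

variable (Q : QuiverData) (d : Fin Q.n → ℕ) (K : Type) [Field K]

/-- Index of the coordinates of the affine space of `d`-dimensional representations:
for each arrow `a` a matrix entry index in `Fin (d (tgt a)) × Fin (d (src a))`. -/
abbrev Coords := Σ a : Fin Q.numArrows, Fin (d (Q.tgt a)) × Fin (d (Q.src a))

/-- The affine space of `d`-dimensional representations of `Q`:
a point `x` assigns to each arrow `a` a `d (tgt a) × d (src a)` matrix over `K`. -/
abbrev RepSpace := Coords Q d → K

/-- `RepSpace` carries the Zariski topology. -/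
noncomputable instance instRepTop : TopologicalSpace (RepSpace Q d K) :=
  zariskiTopology (Coords Q d) K

/-- The underlying `K`-vector space `⊕ᵢ K^{dᵢ}` of any `d`-dimensional representation. -/
abbrev Carrier := (Σ i : Fin Q.n, Fin (d i)) → K

/-- The projection onto the component of the `i`-th vertex (action of the primitive
idempotent `eᵢ`). -/
def proj (i : Fin Q.n) : Carrier Q d K →ₗ[K] Carrier Q d K where
  toFun m := fun jv => if jv.1 = i then m jv else 0
  map_add' u v := by
    funext jv; by_cases h : jv.1 = i <;> simp [h]
  map_smul' c u := by
    funext jv; by_cases h : jv.1 = i <;> simp [h]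

/-- The action of the arrow `a` on the carrier space of the representation `x`. -/
noncomputable def arrowMap (x : RepSpace Q d K) (a : Fin Q.numArrows) :
    Carrier Q d K →ₗ[K] Carrier Q d K where
  toFun m := fun jv =>
    if h : jv.1 = Q.tgt a then
      ∑ w : Fin (d (Q.src a)), x ⟨a, (Fin.cast (congrArg d h) jv.2, w)⟩ * m ⟨Q.src a, w⟩
    else 0
  map_add' u v := by
    funext jv
    by_cases h : jv.1 = Q.tgt a <;> simp [h, mul_add, Finset.sum_add_distrib]
  map_smul' c u := by
    funext jv
    by_cases h : jv.1 = Q.tgt a <;>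
      simp [h, Finset.mul_sum, mul_comm, mul_left_comm, mul_assoc]

/-- The action of a word `w = [a_k, …, a_1]` of arrows on the representation `x`
(the arrow `a_1` acts first; non-composable words act as `0`). -/
noncomputable def wordMap (x : RepSpace Q d K) (w : List (Fin Q.numArrows)) :
    Module.End K (Carrier Q d K) :=
  (w.map fun a => (arrowMap Q d K x a : Module.End K (Carrier Q d K))).prod

/-- The submodule `J^l · M_x` of the module `M_x`: the sum of the images of all words of
arrows of length `l` (for an admissible ideal, the radical acts through the arrows). -/
noncomputable def radPow (x : RepSpace Q d K) (l : ℕ) : Submodule K (Carrier Q d K) :=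
  ⨆ w : {w : List (Fin Q.numArrows) // w.length = l},
    LinearMap.range (wordMap Q d K x w.1)

/-- The socle series of `M_x`: `socPow x l = soc_l(M_x)`. -/
noncomputable def socPow (x : RepSpace Q d K) : ℕ → Submodule K (Carrier Q d K)
  | 0 => ⨅ a, LinearMap.ker (arrowMap Q d K x a)
  | (l+1) => ⨅ a, (socPow x l).comap (arrowMap Q d K x a)

/-- The dimension, at the vertex `i`, of a (vertex-graded) subspace `N`. -/
noncomputable def vdim (N : Submodule K (Carrier Q d K)) (i : Fin Q.n) : ℕ :=
  Module.finrank K (N.map (proj Q d K i))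

/-- The radical layering `S(M_x) = (M/JM, JM/J²M, …, J^L M/J^{L+1} M)` of the module `M_x`,
recorded through the dimension vectors of its semisimple layers. -/
noncomputable def radLayering (L : ℕ) (x : RepSpace Q d K) :
    Fin (L+1) → Fin Q.n → ℕ :=
  fun l i => vdim Q d K (radPow Q d K x l) i - vdim Q d K (radPow Q d K x (l+1)) i

/-- The socle layering `S*(M_x) = (soc₀M, soc₁M/soc₀M, …)` of the module `M_x`, recorded
through the dimension vectors of its semisimple layers. -/
noncomputable def socLayering (L : ℕ) (x : RepSpace Q d K) :
    Fin (L+1) → Fin Q.n → ℕ :=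
  fun l i => vdim Q d K (socPow Q d K x l) i -
    (if (l : ℕ) = 0 then 0 else vdim Q d K (socPow Q d K x ((l : ℕ) - 1)) i)

end QuiverData

/-- The dominance order on semisimple sequences (recorded as sequences of dimension
vectors): `dominates S S'` means `S ≤ S'`, i.e. `⊕_{j≤l} S_j ⊆ ⊕_{j≤l} S'_j` for all `l`. -/
def dominates {n L : ℕ} (S S' : Fin (L+1) → Fin n → ℕ) : Prop :=
  ∀ (l : Fin (L+1)) (i : Fin n),
    ∑ j ∈ Finset.univ.filter (fun j => j ≤ l), S j i ≤
      ∑ j ∈ Finset.univ.filter (fun j => j ≤ l), S' j i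

/-- A semisimple sequence has dimension vector `d` if its layers' dimension vectors sum
to `d`. -/
def hasDimVec {n L : ℕ} (S : Fin (L+1) → Fin n → ℕ) (d : Fin n → ℕ) : Prop :=
  ∀ i, ∑ l, S l i = d i

namespace QuiverData

variable (Q : QuiverData) (d : Fin Q.n → ℕ) (K : Type) [Field K]

/-- Evaluation of a formal noncommutative polynomial in the vertices (`Sum.inl`) and
arrows (`Sum.inr`) of `Q` on the representation `x`; an element of the path algebra `KQ`
is represented by such a polynomial. -/
noncomputable def evalRel (x : RepSpace Q d K) :
    FreeAlgebra K (Fin Q.n ⊕ Fin Q.numArrows) →ₐ[K] Module.End K (Carrier Q d K) :=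
  FreeAlgebra.lift K
    (Sum.elim (fun i => (proj Q d K i : Module.End K (Carrier Q d K)))
      (fun a => (arrowMap Q d K x a : Module.End K (Carrier Q d K))))

/-- The affine variety `Rep_d(Λ)` for `Λ = KQ/I`, where the ideal `I` is generated by the
set `R` of relations: the set of points of `RepSpace` annihilating every relation. -/
def RepVar (R : Set (FreeAlgebra K (Fin Q.n ⊕ Fin Q.numArrows))) :
    Set (RepSpace Q d K) :=
  {x | ∀ r ∈ R, evalRel Q d K x r = 0}

/-- The affine variety `Rep_d(Λ)` for the truncated path algebra
`Λ = KQ/⟨all paths of length L+1⟩`. -/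
def TruncRepVar (L : ℕ) : Set (RepSpace Q d K) :=
  {x | ∀ w : List (Fin Q.numArrows), w.length = L + 1 → wordMap Q d K x w = 0}

/-- A submodule of `M_x`, i.e. a subspace stable under the arrows and the vertex
idempotents. -/
def Stable (x : RepSpace Q d K) (N : Submodule K (Carrier Q d K)) : Prop :=
  (∀ a, N.map (arrowMap Q d K x a) ≤ N) ∧ ∀ i, N.map (proj Q d K i) ≤ N

/-- A submodule `N` of `M_x` is indecomposable (as a module). -/
def IndecompSub (x : RepSpace Q d K) (N : Submodule K (Carrier Q d K)) : Prop :=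
  N ≠ ⊥ ∧ ∀ N₁ N₂ : Submodule K (Carrier Q d K),
    Stable Q d K x N₁ → Stable Q d K x N₂ → N₁ ≤ N → N₂ ≤ N →
    N₁ ⊔ N₂ = N → N₁ ⊓ N₂ = ⊥ → N₁ = ⊥ ∨ N₂ = ⊥

/-- The module `M_x` is indecomposable. -/
def IndecompRep (x : RepSpace Q d K) : Prop :=
  IndecompSub Q d K x ⊤

/-- The module `M_x` is uniserial: its submodules form a chain. -/
def UniserialRep (x : RepSpace Q d K) : Prop :=
  ∀ N₁ N₂ : Submodule K (Carrier Q d K),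
    Stable Q d K x N₁ → Stable Q d K x N₂ → N₁ ≤ N₂ ∨ N₂ ≤ N₁

/-- `M_x` decomposes as a direct sum of `s` indecomposable submodules whose dimension
vectors are `D 0, …, D (s-1)`. -/
def DecompWith (x : RepSpace Q d K) (s : ℕ) (D : Fin s → Fin Q.n → ℕ) : Prop :=
  ∃ N : Fin s → Submodule K (Carrier Q d K),
    (∀ r, Stable Q d K x (N r)) ∧
    (∀ r, Disjoint (N r) (⨆ t, ⨆ (_ : t ≠ r), N t)) ∧
    (⨆ r, N r) = ⊤ ∧
    (∀ r, IndecompSub Q d K x (N r)) ∧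
    ∀ r i, vdim Q d K (N r) i = D r i

/-- A homomorphism of representations `M_x → M_y` (for possibly different dimension
vectors): a linear map commuting with the arrow actions and the vertex projections. -/
def RepHom (dx dy : Fin Q.n → ℕ) (x : RepSpace Q dx K) (y : RepSpace Q dy K)
    (φ : Carrier Q dx K →ₗ[K] Carrier Q dy K) : Prop :=
  (∀ a, φ ∘ₗ arrowMap Q dx K x a = arrowMap Q dy K y a ∘ₗ φ) ∧
  ∀ i, φ ∘ₗ proj Q dx K i = proj Q dy K i ∘ₗ φ

/-- The submodule `N` of `M_x` is isomorphic, as a representation, to `M_y`. -/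
def SubrepIso (dy : Fin Q.n → ℕ) (x : RepSpace Q d K)
    (N : Submodule K (Carrier Q d K)) (y : RepSpace Q dy K) : Prop :=
  ∃ φ : Carrier Q d K →ₗ[K] Carrier Q dy K,
    N ⊓ LinearMap.ker φ = ⊥ ∧ N.map φ = ⊤ ∧
    (∀ a, ∀ m ∈ N, φ (arrowMap Q d K x a m) = arrowMap Q dy K y a (φ m)) ∧
    (∀ i, ∀ m ∈ N, φ (proj Q d K i m) = proj Q dy K i (φ m))

/-- The representations `M_x` and `M_y` are isomorphic; the isomorphism classes are
exactly the orbits of the `GL(d)`-action. -/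
def IsoRep (x y : RepSpace Q d K) : Prop :=
  ∃ φ : Carrier Q d K ≃ₗ[K] Carrier Q d K,
    (∀ a m, φ (arrowMap Q d K x a m) = arrowMap Q d K y a (φ m)) ∧
    ∀ i m, φ (proj Q d K i m) = proj Q d K i (φ m)

/-- The `GL(d)`-orbit of the point `x`, i.e. the set of points encoding modules
isomorphic to `M_x`. -/
def orbitSet (x : RepSpace Q d K) : Set (RepSpace Q d K) :=
  {y | IsoRep Q d K x y}

/-- Given a family `P` of varieties `Rep_dv(Λ)` (one for every dimension vector `dv`),
`Ext¹_Λ(M_x, M_y) = 0`: every extension `0 → M_y → E → M_x → 0` of `Λ`-modules splits. -/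
def Ext1Zero (P : ∀ dv : Fin Q.n → ℕ, Set (RepSpace Q dv K))
    (dx dy : Fin Q.n → ℕ) (x : RepSpace Q dx K) (y : RepSpace Q dy K) : Prop :=
  ∀ z ∈ P (fun i => dx i + dy i),
    ∀ (ι : Carrier Q dy K →ₗ[K] Carrier Q (fun i => dx i + dy i) K)
      (π : Carrier Q (fun i => dx i + dy i) K →ₗ[K] Carrier Q dx K),
      RepHom Q K dy (fun i => dx i + dy i) y z ι →
      RepHom Q K (fun i => dx i + dy i) dx z x π →
      Function.Injective ι → Function.Surjective π →
      LinearMap.ker π = LinearMap.range ι →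
      ∃ σ : Carrier Q dx K →ₗ[K] Carrier Q (fun i => dx i + dy i) K,
        RepHom Q K dx (fun i => dx i + dy i) x z σ ∧ π ∘ₗ σ = LinearMap.id

/-- The direct sum `C₁ ⊕ ⋯ ⊕ C_s` of subvarieties `C_r ⊆ Rep_{D r}(Λ)`: the set of
points `x ∈ Rep_d(Λ)` whose module decomposes as `M_x ≅ ⊕_r M^{(r)}` with `M^{(r)}`
encoded by a point of `C_r`. -/
def DirectSumSet (s : ℕ) (D : Fin s → Fin Q.n → ℕ)
    (Cs : ∀ r : Fin s, Set (RepSpace Q (D r) K)) : Set (RepSpace Q d K) :=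
  {x | ∃ N : Fin s → Submodule K (Carrier Q d K),
    (∀ r, Stable Q d K x (N r)) ∧
    (∀ r, Disjoint (N r) (⨆ t, ⨆ (_ : t ≠ r), N t)) ∧
    (⨆ r, N r) = ⊤ ∧
    ∀ r, ∃ y ∈ Cs r, SubrepIso Q d K (D r) x (N r) y}

/-- The endomorphism space `End_Λ(M_x)` of the module `M_x`. -/
def endSpace (x : RepSpace Q d K) :
    Submodule K (Carrier Q d K →ₗ[K] Carrier Q d K) where
  carrier := {φ | RepHom Q K d d x x φ}
  add_mem' := by
    intro φ ψ hφ hψ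
    exact ⟨fun a => by rw [LinearMap.add_comp, LinearMap.comp_add, hφ.1 a, hψ.1 a],
      fun i => by rw [LinearMap.add_comp, LinearMap.comp_add, hφ.2 i, hψ.2 i]⟩
  zero_mem' := by
    exact ⟨fun a => by simp, fun i => by simp⟩
  smul_mem' := by
    intro c φ hφ
    exact ⟨fun a => by rw [LinearMap.smul_comp, LinearMap.comp_smul, hφ.1 a],
      fun i => by rw [LinearMap.smul_comp, LinearMap.comp_smul, hφ.2 i]⟩

/-- A word of arrows is a (composable) path when read in function-composition order. -/
def IsPathWord (w : List (Fin Q.numArrows)) : Prop :=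
  List.Chain' (fun a b => Q.src a = Q.tgt b) w

/-- The quiver `Q` has no oriented cycles. -/
def Acyclic : Prop :=
  ∀ (a : Fin Q.numArrows) (w : List (Fin Q.numArrows)),
    IsPathWord Q (a :: w) →
      Q.tgt a ≠ Q.src ((a :: w).getLast (List.cons_ne_nil a w))

/-- A filtration `M_x = F 0 ⊇ F 1 ⊇ ⋯ ⊇ F (L+1) = 0` by submodules which is governed by
the semisimple sequence `S`: each layer `F l / F (l+1)` is semisimple, isomorphic to `S l`. -/
def Governed (L : ℕ) (x : RepSpace Q d K) (S : Fin (L+1) → Fin Q.n → ℕ)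
    (F : Fin (L+2) → Submodule K (Carrier Q d K)) : Prop :=
  F 0 = ⊤ ∧ F (Fin.last (L+1)) = ⊥ ∧
  (∀ l : Fin (L+1), F l.succ ≤ F l.castSucc) ∧
  (∀ (l : Fin (L+2)) (i : Fin Q.n), (F l).map (proj Q d K i) ≤ F l) ∧
  (∀ (l : Fin (L+1)) (a : Fin Q.numArrows),
      (F l.castSucc).map (arrowMap Q d K x a) ≤ F l.succ) ∧
  ∀ (l : Fin (L+1)) (i : Fin Q.n),
      vdim Q d K (F l.castSucc) i = S l i + vdim Q d K (F l.succ) i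

/-- `Filt S`: the set of points whose module has a filtration governed by `S`. -/
def FiltSet (L : ℕ) (S : Fin (L+1) → Fin Q.n → ℕ) : Set (RepSpace Q d K) :=
  {x | ∃ F, Governed Q d K L x S F}

/-- `Γ(M_x)`: the number of semisimple sequences which are realizable (i.e. occur as the
radical layering of a module in the variety `P`) and which govern some filtration of `M_x`. -/
noncomputable def gammaCount (L : ℕ) (P : Set (RepSpace Q d K))
    (x : RepSpace Q d K) : ℕ :=
  Set.ncard {S : Fin (L+1) → Fin Q.n → ℕ |
    (∃ y ∈ P, radLayering Q d K L y = S) ∧ ∃ F, Governed Q d K L x S F}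

/-- `Sstar` is the generic (= minimal, attained) socle layering of the modules in `W`. -/
def GenSoc (L : ℕ) (W : Set (RepSpace Q d K))
    (Sstar : Fin (L+1) → Fin Q.n → ℕ) : Prop :=
  (∀ x ∈ W, dominates Sstar (socLayering Q d K L x)) ∧
  ∃ x ∈ W, socLayering Q d K L x = Sstar

end QuiverData

namespace QuiverData

variable (Q : QuiverData)

/-- The `i`-th entry of the row vector `e·A` (over `ℤ`), where `A` is the adjacency
matrix of `Q`: the sum of `e (src a)` over all arrows `a` ending at `i`. -/
def inflowZ (e : Fin Q.n → ℤ) (i : Fin Q.n) : ℤ :=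
  ∑ a ∈ Finset.univ.filter (fun a => Q.tgt a = i), e (Q.src a)

/-- The `i`-th entry of the row vector `e·B` (over `ℤ`), where `B` is the transpose of
the adjacency matrix of `Q`. -/
def outflowZ (e : Fin Q.n → ℤ) (i : Fin Q.n) : ℤ :=
  ∑ a ∈ Finset.univ.filter (fun a => Q.src a = i), e (Q.tgt a)

/-- Partial sums `t⁽⁰⁾ + ⋯ + t⁽ˡ⁾` of the recursion
`t⁽⁰⁾ = sup{0, d − d·A}`, `t⁽ˡ⁺¹⁾ = sup{0, (d − ∑_{k≤l} t⁽ᵏ⁾) − (d − ∑_{k≤l} t⁽ᵏ⁾)·A}`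
(computed componentwise). -/
def cumLayer (dz : Fin Q.n → ℤ) : ℕ → Fin Q.n → ℤ
  | 0 => fun i => max 0 (dz i - inflowZ Q dz i)
  | (l+1) => fun i =>
      cumLayer dz l i +
        max 0 ((dz i - cumLayer dz l i) -
          inflowZ Q (fun j => dz j - cumLayer dz l j) i)

/-- The positive part `∑ᵢ eᵢ fᵢ` of the Euler form of `Q`. -/
def eulerHomPart (e f : Fin Q.n → ℕ) : ℕ := ∑ i, e i * f i

/-- The negative part `∑_{α} e_{src α} f_{tgt α}` of the Euler form of `Q`, so that
`⟨e, f⟩ = eulerHomPart e f − eulerExtPart e f`. -/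
def eulerExtPart (e f : Fin Q.n → ℕ) : ℕ :=
  ∑ a, e (Q.src a) * f (Q.tgt a)

end QuiverData

/-- The quiver with a single vertex and `r` loops. -/
def QuiverData.loopQuiver (r : ℕ) : QuiverData :=
  ⟨1, r, fun _ => 0, fun _ => 0⟩

namespace QuiverData

variable (Q : QuiverData) (d : Fin Q.n → ℕ) (K : Type) [Field K]

/-- The variety `Rep_d(Λ)` for `Λ = KQ/⟨Rels⟩`, regarded as a topological space with the
(subspace) Zariski topology. -/
abbrev GenV (Rels : Set (FreeAlgebra K (Fin Q.n ⊕ Fin Q.numArrows))) :=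
  {y : RepSpace Q d K // y ∈ RepVar Q d K Rels}

/-- The variety `Rep_d(Λ)` for the truncated path algebra
`Λ = KQ/⟨paths of length L+1⟩`, regarded as a topological space. -/
abbrev TruncV (L : ℕ) := {y : RepSpace Q d K // y ∈ TruncRepVar Q d K L}

end QuiverData

open Finset

namespace QuiverData

section Reduction

variable {E : Type} [Field E] (V : ValuationSubring E)

local notation "kk" => IsLocalRing.ResidueField V

theorem scale_exists {κ : Type*} [Finite κ] (c : κ → E) (hc : c ≠ 0) :
    ∃ (t : E) (r : κ → V), t ≠ 0 ∧ (∀ i, (r i : E) = t * c i) ∧ ∃ i, r i = 1 := by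
  classical
  obtain ⟨i0, hi0⟩ : ∃ i, c i ≠ 0 := by
    by_contra h
    push Not at h
    exact hc (funext h)
  have : Nonempty κ := ⟨i0⟩
  obtain ⟨j, hj⟩ := Finite.exists_max (fun i => V.valuation (c i))
  have hcj : c j ≠ 0 := by
    intro h
    have := hj i0
    simp only [h, map_zero, le_zero_iff, map_eq_zero] at this
    exact hi0 this
  have hmem : ∀ i, (c j)⁻¹ * c i ∈ V := by
    intro i
    rw [← V.valuation_le_one_iff, map_mul, map_inv₀]
    have h0 : V.valuation (c j) ≠ 0 := by simpa using hcj
    calc (V.valuation (c j))⁻¹ * V.valuation (c i)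
        ≤ (V.valuation (c j))⁻¹ * V.valuation (c j) := by
          gcongr
          exact hj i
      _ = 1 := inv_mul_cancel₀ h0
  refine ⟨(c j)⁻¹, fun i => ⟨_, hmem i⟩, inv_ne_zero hcj, fun i => rfl, j, ?_⟩
  ext
  simp [hcj]

theorem linInd_lift {κ ι : Type*} [Fintype κ] (u : κ → ι → V)
    (h : LinearIndependent kk (fun j => fun i => IsLocalRing.residue V (u j i))) :
    LinearIndependent E (fun j => fun i => ((u j i : V) : E)) := by
  rw [Fintype.linearIndependent_iff] at h ⊢
  intro c hc
  by_contra hne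
  have hc0 : c ≠ 0 := fun h0 => hne (fun i => by rw [h0]; rfl)
  obtain ⟨t, r, ht, hr, i1, hi1⟩ := scale_exists V c hc0
  have key : ∀ i, ∑ j, r j * u j i = 0 := by
    intro i
    have h1 := congrFun hc i
    simp only [Finset.sum_apply, Pi.smul_apply, smul_eq_mul, Pi.zero_apply] at h1
    apply Subtype.ext
    push_cast
    simp only [hr, mul_assoc]
    rw [← Finset.mul_sum, h1, mul_zero]
  have := h (fun j => IsLocalRing.residue V (r j)) (by
    funext i
    simp only [Finset.sum_apply, Pi.smul_apply, smul_eq_mul, Pi.zero_apply, ← map_mul, ← map_sum,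
      key, map_zero]) i1
  rw [hi1, map_one] at this
  exact one_ne_zero this

/-- The reduction of a subspace of `E^ι` modulo the maximal ideal of `V`. -/
def redSub {ι : Type*} (W : Submodule E (ι → E)) : Submodule kk (ι → kk) where
  carrier := {m | ∃ r : ι → V, (fun i => ((r i : V) : E)) ∈ W ∧
    (fun i => IsLocalRing.residue V (r i)) = m}
  add_mem' := by
    rintro _ _ ⟨r, hr, rfl⟩ ⟨s, hs, rfl⟩
    refine ⟨r + s, ?_, ?_⟩
    · exact W.add_mem hr hs
    · funext i; simp
  zero_mem' := ⟨0, W.zero_mem, by funext i; simp⟩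
  smul_mem' := by
    rintro c _ ⟨r, hr, rfl⟩
    obtain ⟨c, rfl⟩ := IsLocalRing.residue_surjective c
    refine ⟨fun i => c * r i, ?_, ?_⟩
    · exact W.smul_mem (c : E) hr
    · funext i; simp

theorem finrank_redSub {ι : Type*} [Fintype ι] (W : Submodule E (ι → E)) :
    Module.finrank kk (redSub V W) = Module.finrank E W := by
  apply le_antisymm
  · let b := Module.finBasis kk (redSub V W)
    choose r hr1 hr2 using fun j => (b j).2
    have hli : LinearIndependent kk (fun j => fun i => IsLocalRing.residue V (r j i)) := by
      have := b.linearIndependent.map' (redSub V W).subtype (Submodule.ker_subtype _)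
      have e : (fun j => fun i => IsLocalRing.residue V (r j i)) = (redSub V W).subtype ∘ b := by
        funext j
        exact hr2 j
      rw [e]
      exact this
    have h2 := linInd_lift V r hli
    have h3 : LinearIndependent E (fun j => (⟨_, hr1 j⟩ : W)) :=
      LinearIndependent.of_comp W.subtype h2
    simpa using h3.fintype_card_le_finrank
  · obtain ⟨U, hU⟩ := Submodule.exists_isCompl (redSub V W)
    let b := Module.finBasis kk U
    choose r hr using fun j => (fun i => IsLocalRing.residue_surjective ((b j).1 i) :
      ∀ i, ∃ a, IsLocalRing.residue V a = (b j).1 i)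
    have hli : LinearIndependent kk (fun j => fun i => IsLocalRing.residue V (r j i)) := by
      have := b.linearIndependent.map' U.subtype (Submodule.ker_subtype _)
      have e : (fun j => fun i => IsLocalRing.residue V (r j i)) = U.subtype ∘ b := by
        funext j i
        exact hr j i
      rw [e]
      exact this
    have h2 := linInd_lift V r hli
    have hd : Disjoint W (Submodule.span E (Set.range (fun j => fun i => ((r j i : V) : E)))) := by
      rw [Submodule.disjoint_def]
      intro w hw hwU
      rw [Submodule.mem_span_range_iff_exists_fun] at hwU
      obtain ⟨c, hc⟩ := hwU
      by_contra hw0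
      have hc0 : c ≠ 0 := by
        rintro rfl
        simp at hc
        exact hw0 hc.symm
      obtain ⟨t, s, ht, hs, i1, hi1⟩ := scale_exists V c hc0
      have e1 : (fun i => ((∑ j, s j * r j i : V) : E)) = t • w := by
        rw [← hc]
        funext i
        simp [Finset.sum_apply, hs, Finset.mul_sum, mul_assoc]
      have m1 : (fun i => IsLocalRing.residue V (∑ j, s j * r j i)) ∈ redSub V W :=
        ⟨_, by rw [e1]; exact W.smul_mem _ hw, rfl⟩
      have e2 : (fun i => IsLocalRing.residue V (∑ j, s j * r j i)) =
          ∑ j, IsLocalRing.residue V (s j) • (fun i => IsLocalRing.residue V (r j i)) := by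
        funext i
        simp [Finset.sum_apply]
      have m2 : (fun i => IsLocalRing.residue V (∑ j, s j * r j i)) ∈ U := by
        rw [e2]
        refine U.sum_mem fun j _ => U.smul_mem _ ?_
        have : (fun i => IsLocalRing.residue V (r j i)) = (b j).1 := funext fun i => hr j i
        rw [this]
        exact (b j).2
      have h0 := (Submodule.disjoint_def.1 hU.disjoint) _ m1 m2
      rw [e2] at h0
      have := (Fintype.linearIndependent_iff.1 hli) _ h0 i1
      rw [hi1, map_one] at this
      exact one_ne_zero this
    have hle := Submodule.finrank_add_finrank_le_of_disjoint hd
    rw [finrank_span_eq_card h2] at hle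
    have hs := Submodule.finrank_add_eq_of_isCompl hU
    simp only [Module.finrank_fintype_fun_eq_card, Fintype.card_fin] at hle hs
    omega

variable (Q : QuiverData) (d : Fin Q.n → ℕ) (L : ℕ)

theorem map_proj_redSub (i : Fin Q.n) (W : Submodule E (Carrier Q d E))
    (h : W.map (proj Q d E i) ≤ W) :
    (redSub V W).map (proj Q d kk i) = redSub V (W.map (proj Q d E i)) := by
  ext m
  constructor
  · rintro ⟨_, ⟨r, hr, rfl⟩, rfl⟩
    refine ⟨fun p => if p.1 = i then r p else 0, ⟨_, hr, ?_⟩, ?_⟩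
    · funext p
      by_cases hp : p.1 = i <;> simp [proj, hp]
    · funext p
      by_cases hp : p.1 = i <;> simp [proj, hp]
  · rintro ⟨r, hr, rfl⟩
    refine ⟨_, ⟨r, h hr, rfl⟩, ?_⟩
    obtain ⟨w, hw, hwr⟩ := hr
    funext p
    have := congrFun hwr p
    by_cases hp : p.1 = i
    · simp [proj, hp]
    · simp [proj, hp] at this
      have h0 : r p = 0 := Subtype.ext this.symm
      simp [proj, hp, h0]

theorem governed_reduce (x : Coords Q d → V) (S : Fin (L+1) → Fin Q.n → ℕ)
    (F : Fin (L+2) → Submodule E (Carrier Q d E))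
    (hF : Governed Q d E L (fun c => ((x c : V) : E)) S F) :
    Governed Q d kk L (fun c => IsLocalRing.residue V (x c)) S (fun l => redSub V (F l)) := by
  obtain ⟨h0, h1, h2, h3, h4, h5⟩ := hF
  refine ⟨?_, ?_, ?_, ?_, ?_, ?_⟩
  · show redSub V (F 0) = ⊤
    rw [h0, eq_top_iff]
    intro m _
    choose r hr using fun i => IsLocalRing.residue_surjective (m i)
    exact ⟨r, trivial, funext hr⟩
  · show redSub V (F (Fin.last (L+1))) = ⊥
    rw [h1, eq_bot_iff]
    rintro _ ⟨r, hr, rfl⟩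
    rw [Submodule.mem_bot] at hr ⊢
    funext i
    have : r i = 0 := Subtype.ext (congrFun hr i)
    simp [this]
  · rintro l _ ⟨r, hr, rfl⟩
    exact ⟨r, h2 l hr, rfl⟩
  · intro l i
    rw [map_proj_redSub V Q d i _ (h3 l i)]
    rintro _ ⟨r, hr, rfl⟩
    exact ⟨r, h3 l i hr, rfl⟩
  · rintro l a _ ⟨_, ⟨r, hr, rfl⟩, rfl⟩
    refine ⟨fun jv => if h : jv.1 = Q.tgt a then
      ∑ w : Fin (d (Q.src a)), x ⟨a, (Fin.cast (congrArg d h) jv.2, w)⟩ * r ⟨Q.src a, w⟩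
      else 0, h4 l a ⟨_, hr, ?_⟩, ?_⟩
    · funext p
      by_cases hp : p.1 = Q.tgt a <;> simp [arrowMap, hp]
    · funext p
      by_cases hp : p.1 = Q.tgt a <;> simp [arrowMap, hp]
  · intro l i
    have := h5 l i
    simp only [vdim] at this ⊢
    rw [map_proj_redSub V Q d i _ (h3 _ i), map_proj_redSub V Q d i _ (h3 _ i),
      finrank_redSub, finrank_redSub]
    exact this

end Reduction

end QuiverData

open Finset

namespace QuiverData

section Param

variable (Q : QuiverData) (d : Fin Q.n → ℕ)

/-- Index set of the standard basis of the carrier. -/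
abbrev Idx := Σ i : Fin Q.n, Fin (d i)

/-- Index set of the coordinates of the parametrizing affine space. -/
abbrev PIdx := (Idx Q d × Idx Q d) ⊕ Coords Q d

variable {R : Type} [CommRing R]

/-- The matrix of the action of the arrow `a`. -/
def amat (x : Coords Q d → R) (a : Fin Q.numArrows) : Matrix (Idx Q d) (Idx Q d) R :=
  fun p q => if h : p.1 = Q.tgt a ∧ q.1 = Q.src a then
    x ⟨a, (Fin.cast (congrArg d h.1) p.2, Fin.cast (congrArg d h.2) q.2)⟩ else 0

/-- The block diagonal matrix given by the parameters. -/
def gmat (y : PIdx Q d → R) : Matrix (Idx Q d) (Idx Q d) R :=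
  fun p q => if p.1 = q.1 then y (Sum.inl (p, q)) else 0

variable {L : ℕ} (deg : Idx Q d → Fin (L+1))

/-- The point strictly compatible with the standard flag given by the parameters. -/
def npt (y : PIdx Q d → R) : Coords Q d → R :=
  fun c => if deg ⟨Q.src c.1, c.2.2⟩ < deg ⟨Q.tgt c.1, c.2.1⟩ then y (Sum.inr c) else 0

/-- The parametrization of `Filt S`. -/
def phi (y : PIdx Q d → R) : Coords Q d → R :=
  fun c => (gmat Q d y * amat Q d (npt Q d deg y) c.1 * (gmat Q d y).adjugate)
    ⟨Q.tgt c.1, c.2.1⟩ ⟨Q.src c.1, c.2.2⟩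

theorem gmat_map {R' : Type} [CommRing R'] (f : R →+* R') (y : PIdx Q d → R) :
    gmat Q d (fun k => f (y k)) = f.mapMatrix (gmat Q d y) := by
  ext p q
  by_cases h : p.1 = q.1 <;> simp [gmat, h]

theorem amat_map {R' : Type} [CommRing R'] (f : R →+* R') (x : Coords Q d → R) (a) :
    amat Q d (fun k => f (x k)) a = f.mapMatrix (amat Q d x a) := by
  ext p q
  by_cases h : p.1 = Q.tgt a ∧ q.1 = Q.src a <;> simp [amat, h]

theorem npt_map {R' : Type} [CommRing R'] (f : R →+* R') (y : PIdx Q d → R) :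
    npt Q d deg (fun k => f (y k)) = fun c => f (npt Q d deg y c) := by
  funext c
  simp only [npt]
  split_ifs <;> simp

theorem phi_map {R' : Type} [CommRing R'] (f : R →+* R') (y : PIdx Q d → R) :
    phi Q d deg (fun k => f (y k)) = fun c => f (phi Q d deg y c) := by
  funext c
  simp only [phi]
  rw [gmat_map, npt_map, amat_map, ← RingHom.map_adjugate, ← map_mul, ← map_mul]
  rfl

theorem det_gmat_map {R' : Type} [CommRing R'] (f : R →+* R') (y : PIdx Q d → R) :
    (gmat Q d (fun k => f (y k))).det = f (gmat Q d y).det := by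
  rw [gmat_map, RingHom.map_det]

theorem amat_extract (M : Fin Q.numArrows → Matrix (Idx Q d) (Idx Q d) R) (a : Fin Q.numArrows)
    (hM : ∀ p q, ¬ (p.1 = Q.tgt a ∧ q.1 = Q.src a) → M a p q = 0) :
    amat Q d (fun c => M c.1 ⟨Q.tgt c.1, c.2.1⟩ ⟨Q.src c.1, c.2.2⟩) a = M a := by
  ext p q
  by_cases h : p.1 = Q.tgt a ∧ q.1 = Q.src a
  · obtain ⟨i, v⟩ := p
    obtain ⟨j, w⟩ := q
    obtain ⟨h1, h2⟩ := h
    simp only at h1 h2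
    subst h1
    subst h2
    simp [amat]
  · rw [hM p q h]
    simp [amat, h]

theorem amat_coord (x : Coords Q d → R) (c : Coords Q d) :
    amat Q d x c.1 ⟨Q.tgt c.1, c.2.1⟩ ⟨Q.src c.1, c.2.2⟩ = x c := by
  simp [amat]

variable {K : Type} [Field K]

theorem toLin_amat (x : RepSpace Q d K) (a : Fin Q.numArrows) :
    arrowMap Q d K x a = Matrix.toLin' (amat Q d x a) := by
  apply LinearMap.ext
  intro m
  rw [Matrix.toLin'_apply]
  funext p
  simp only [Matrix.mulVec, dotProduct]
  rw [Fintype.sum_sigma, Finset.sum_eq_single (Q.src a)]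
  · by_cases h : p.1 = Q.tgt a <;> simp [arrowMap, amat, h]
  · intro j _ hj
    apply Finset.sum_eq_zero
    intro v _
    simp [amat, hj]
  · simp

/-- Block diagonal matrices. -/
def BlockDiag (g : Matrix (Idx Q d) (Idx Q d) R) : Prop := ∀ p q, p.1 ≠ q.1 → g p q = 0

theorem blockDiag_gmat (y : PIdx Q d → R) : BlockDiag Q d (gmat Q d y) := by
  intro p q h
  simp [gmat, h]

theorem blockDiag_adjugate (g : Matrix (Idx Q d) (Idx Q d) K) (hg : BlockDiag Q d g)
    (hdet : g.det ≠ 0) : BlockDiag Q d g.adjugate := by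
  intro p q hpq
  let D : Matrix (Idx Q d) (Idx Q d) K := Matrix.diagonal (fun r => if r.1 = q.1 then 1 else 0)
  have hcomm : D * g = g * D := by
    ext r s
    simp only [D, Matrix.diagonal_mul, Matrix.mul_diagonal]
    by_cases hrs : r.1 = s.1
    · rw [hrs, mul_comm]
    · simp [hg r s hrs]
  have h2 : g.det • (g.adjugate * D) = g.det • (D * g.adjugate) := by
    calc g.det • (g.adjugate * D) = g.adjugate * D * (g.det • 1) := by simp
      _ = g.adjugate * D * (g * g.adjugate) := by rw [Matrix.mul_adjugate]
      _ = g.adjugate * (D * g) * g.adjugate := by simp only [Matrix.mul_assoc]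
      _ = (g.adjugate * g) * D * g.adjugate := by rw [hcomm]; simp only [Matrix.mul_assoc]
      _ = g.det • (D * g.adjugate) := by rw [Matrix.adjugate_mul]; simp
  have h3 := congrFun (congrFun h2 p) q
  simp only [D, Matrix.smul_apply, Matrix.diagonal_mul, Matrix.mul_diagonal, if_true, mul_one,
    if_neg hpq, zero_mul, smul_eq_mul, mul_zero] at h3
  simpa [hdet] using h3

theorem block_conj (g A h : Matrix (Idx Q d) (Idx Q d) R) (hg : BlockDiag Q d g)
    (hh : BlockDiag Q d h) (i j : Fin Q.n)
    (hA : ∀ p q, ¬ (p.1 = i ∧ q.1 = j) → A p q = 0) :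
    ∀ p q, ¬ (p.1 = i ∧ q.1 = j) → (g * A * h) p q = 0 := by
  intro p q hpq
  rw [Matrix.mul_apply]
  apply Finset.sum_eq_zero
  intro s _
  rw [Matrix.mul_apply]
  by_cases hs : s.1 = q.1
  · rw [Finset.sum_eq_zero, zero_mul]
    intro r _
    by_cases hr : p.1 = r.1
    · rw [hA r s (by rw [← hr, hs]; exact hpq), mul_zero]
    · rw [hg p r hr, zero_mul]
  · rw [hh s q hs, mul_zero]

theorem amat_block (x : Coords Q d → R) (a) : 
    ∀ p q, ¬ (p.1 = Q.tgt a ∧ q.1 = Q.src a) → amat Q d x a p q = 0 := by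
  intro p q h
  simp [amat, h]

theorem amat_npt (y : PIdx Q d → R) (a) (p q : Idx Q d) (h : ¬ deg q < deg p) :
    amat Q d (npt Q d deg y) a p q = 0 := by
  by_cases hb : p.1 = Q.tgt a ∧ q.1 = Q.src a
  · obtain ⟨i, v⟩ := p
    obtain ⟨j, w⟩ := q
    obtain ⟨h1, h2⟩ := hb
    simp only at h1 h2
    subst h1
    subst h2
    simp only [amat, npt, and_self, dite_true, Fin.cast_eq_self, h, if_false]
  · exact amat_block Q d _ a p q hb

theorem amat_phi (y : PIdx Q d → K) (hdet : (gmat Q d y).det ≠ 0) (a) :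
    amat Q d (phi Q d deg y) a =
      gmat Q d y * amat Q d (npt Q d deg y) a * (gmat Q d y).adjugate := by
  refine amat_extract Q d (fun a => gmat Q d y * amat Q d (npt Q d deg y) a *
    (gmat Q d y).adjugate) a ?_
  exact block_conj Q d _ _ _ (blockDiag_gmat Q d y)
    (blockDiag_adjugate Q d _ (blockDiag_gmat Q d y) hdet) _ _ (amat_block Q d _ a)

/-- The standard flag. -/
def stdF (K : Type) [Field K] (l : ℕ) : Submodule K (Carrier Q d K) where
  carrier := {m | ∀ p, (deg p : ℕ) < l → m p = 0}
  add_mem' := by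
    intro a b ha hb p hp
    simp [ha p hp, hb p hp]
  zero_mem' := by intro p _; rfl
  smul_mem' := by
    intro c a ha p hp
    simp [ha p hp]

/-- Functions supported on a finite set. -/
theorem finrank_supp {ι : Type*} [Fintype ι] (T : Finset ι) (W : Submodule K (ι → K))
    (hW : ∀ m, m ∈ W ↔ ∀ p, p ∉ T → m p = 0) : Module.finrank K W = #T := by
  classical
  let f : W →ₗ[K] (T → K) := (LinearMap.funLeft K K (fun p : T => p.1)) ∘ₗ W.subtype
  have hf : Function.Bijective f := by
    constructor
    · rw [injective_iff_map_eq_zero]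
      rintro ⟨m, hm⟩ h0
      apply Subtype.ext
      funext p
      by_cases hp : p ∈ T
      · exact congrFun h0 ⟨p, hp⟩
      · exact (hW m).1 hm p hp
    · intro m
      refine ⟨⟨fun p => if h : p ∈ T then m ⟨p, h⟩ else 0, ?_⟩, ?_⟩
      · rw [hW]
        intro p hp
        simp [hp]
      · funext p
        simp [f, LinearMap.funLeft]
  rw [(LinearEquiv.ofBijective f hf).finrank_eq]
  simp

theorem proj_comm_blockDiag (g : Matrix (Idx Q d) (Idx Q d) K) (hg : BlockDiag Q d g) (i : Fin Q.n)
    (m : Carrier Q d K) :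
    proj Q d K i (Matrix.toLin' g m) = Matrix.toLin' g (proj Q d K i m) := by
  funext p
  simp only [proj, Matrix.toLin'_apply, LinearMap.coe_mk, AddHom.coe_mk, Matrix.mulVec, dotProduct]
  split_ifs with h
  · apply Finset.sum_congr rfl
    intro q _
    by_cases hq : p.1 = q.1
    · rw [if_pos (hq ▸ h)]
    · rw [hg p q hq, zero_mul, zero_mul]
  · symm
    apply Finset.sum_eq_zero
    intro q _
    by_cases hq : p.1 = q.1
    · rw [if_neg (hq ▸ h), mul_zero]
    · rw [hg p q hq, zero_mul]

theorem governed_phi (S : Fin (L+1) → Fin Q.n → ℕ)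
    (hdeg : ∀ l i, #{p : Idx Q d | p.1 = i ∧ deg p = l} = S l i)
    (y : PIdx Q d → K) (hdet : (gmat Q d y).det ≠ 0) :
    Governed Q d K L (phi Q d deg y) S
      (fun l => (stdF Q d deg K l).map (Matrix.toLin' (gmat Q d y))) := by
  set g := gmat Q d y with hgdef
  have hg : BlockDiag Q d g := blockDiag_gmat Q d y
  have hinj : Function.Injective (Matrix.toLin' g) := by
    rw [← LinearMap.ker_eq_bot, Matrix.ker_toLin'_eq_bot_iff]
    intro v hv
    exact Matrix.eq_zero_of_mulVec_eq_zero hdet hv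
  have hsurj : Function.Surjective (Matrix.toLin' g) :=
    LinearMap.injective_iff_surjective.1 hinj
  have hmp : ∀ (l : ℕ) i, ((stdF Q d deg K l).map (Matrix.toLin' g)).map (proj Q d K i) =
      ((stdF Q d deg K l).map (proj Q d K i)).map (Matrix.toLin' g) := by
    intro l i
    rw [← Submodule.map_comp, ← Submodule.map_comp]
    congr 1
    apply LinearMap.ext
    intro m
    exact proj_comm_blockDiag Q d g hg i m
  have hpst : ∀ (l : ℕ) i, (stdF Q d deg K l).map (proj Q d K i) ≤ stdF Q d deg K l := by
    rintro l i _ ⟨m, hm, rfl⟩ p hp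
    simp [proj, hm p hp]
  refine ⟨?_, ?_, ?_, ?_, ?_, ?_⟩
  · have : stdF Q d deg K 0 = ⊤ := by
      rw [eq_top_iff]
      intro m _ p hp
      exact absurd hp (Nat.not_lt_zero _)
    show (stdF Q d deg K 0).map _ = ⊤
    rw [this, Submodule.map_top, LinearMap.range_eq_top.2 hsurj]
  · have : stdF Q d deg K (L+1) = ⊥ := by
      rw [eq_bot_iff]
      intro m hm
      rw [Submodule.mem_bot]
      funext p
      exact hm p (deg p).2
    show (stdF Q d deg K (L+1)).map _ = ⊥
    rw [this, Submodule.map_bot]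
  · intro l
    apply Submodule.map_mono
    intro m hm p hp
    refine hm p ?_
    simp only [Fin.val_castSucc, Fin.val_succ] at hp ⊢
    omega
  · intro l i
    show ((stdF Q d deg K l).map (Matrix.toLin' g)).map (proj Q d K i) ≤ _
    rw [hmp]
    exact Submodule.map_mono (hpst _ _)
  · rintro l a _ ⟨_, ⟨m, hm, rfl⟩, rfl⟩
    refine ⟨g.det • (amat Q d (npt Q d deg y) a).mulVec m, ?_, ?_⟩
    · apply Submodule.smul_mem
      intro p hp
      simp only [Matrix.mulVec, dotProduct]
      apply Finset.sum_eq_zero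
      intro q _
      by_cases hqp : deg q < deg p
      · rw [hm q, mul_zero]
        simp only [Fin.val_castSucc, Fin.val_succ] at hp ⊢
        have : (deg q : ℕ) < deg p := hqp
        omega
      · rw [amat_npt Q d deg y a p q hqp, zero_mul]
    · rw [toLin_amat, amat_phi Q d deg y hdet, ← hgdef]
      simp only [Matrix.toLin'_apply, Matrix.mulVec_mulVec, Matrix.mulVec_smul]
      rw [Matrix.mul_assoc _ _ g, Matrix.adjugate_mul]
      simp [Matrix.smul_mulVec]
  · intro l i
    have hfr : ∀ k : ℕ, vdim Q d K ((stdF Q d deg K k).map (Matrix.toLin' g)) i =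
        #{p : Idx Q d | p.1 = i ∧ k ≤ deg p} := by
      intro k
      rw [vdim, hmp, ← LinearEquiv.finrank_eq (Submodule.equivMapOfInjective _ hinj _)]
      apply finrank_supp
      intro m
      constructor
      · rintro ⟨m, hm, rfl⟩ p hp
        simp only [mem_filter, mem_univ, true_and, not_and, not_le] at hp
        by_cases hpi : p.1 = i
        · simp [proj, hpi, hm p (hp hpi)]
        · simp [proj, hpi]
      · intro h
        refine ⟨m, fun p hp => h p (by simp [hp]), ?_⟩
        funext p
        by_cases hpi : p.1 = i
        · simp [proj, hpi]
        · simp [proj, hpi, h p (by simp [hpi])]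
    show vdim Q d K ((stdF Q d deg K (l : ℕ)).map (Matrix.toLin' g)) i = 
      S l i + vdim Q d K ((stdF Q d deg K ((l : ℕ)+1)).map (Matrix.toLin' g)) i
    rw [hfr, hfr, ← hdeg l i, ← Finset.card_union_of_disjoint]
    · congr 1
      ext p
      simp only [mem_filter, mem_univ, true_and, mem_union, Fin.ext_iff]
      constructor
      · rintro ⟨h1, h2⟩
        rcases Nat.eq_or_lt_of_le h2 with h | h
        · exact Or.inl ⟨h1, h.symm⟩
        · exact Or.inr ⟨h1, h⟩
      · rintro (⟨h1, h2⟩ | ⟨h1, h2⟩)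
        · exact ⟨h1, h2.ge⟩
        · exact ⟨h1, by omega⟩
    · rw [Finset.disjoint_left]
      intro p hp hp2
      simp only [mem_filter, mem_univ, true_and, Fin.ext_iff] at hp hp2
      omega

end Param

end QuiverData

open Finset

namespace QuiverData

section Param2

variable {K : Type} [Field K]

theorem exists_compl_family {M : Type*} [AddCommGroup M] [Module K M] [Module.Finite K M]
    (A B : Submodule K M) (hBA : B ≤ A) (T : Type*) [Fintype T]
    (hT : Module.finrank K A = Fintype.card T + Module.finrank K B) :
    ∃ w : T → M, (∀ t, w t ∈ A) ∧ A ≤ B ⊔ Submodule.span K (Set.range w) := by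
  obtain ⟨W, hW⟩ := Submodule.exists_isCompl (B.comap A.subtype)
  have h1 := Submodule.finrank_add_eq_of_isCompl hW
  have h2 : Module.finrank K (B.comap A.subtype) = Module.finrank K B :=
    LinearEquiv.finrank_eq (Submodule.comapSubtypeEquivOfLe hBA)
  have h3 : Module.finrank K W = Fintype.card T := by omega
  let b := Module.finBasis K W
  let e : T ≃ Fin (Module.finrank K W) := Fintype.equivFinOfCardEq h3.symm
  refine ⟨fun t => ((b (e t) : W) : A), fun t => ((b (e t) : W) : A).2, ?_⟩
  intro a ha
  have h4 : (⟨a, ha⟩ : A) ∈ B.comap A.subtype ⊔ W := by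
    rw [hW.sup_eq_top]; trivial
  obtain ⟨u, hu, v, hv, huv⟩ := Submodule.mem_sup.1 h4
  have h5 : a = (u : M) + (v : M) := by
    have := congrArg A.subtype huv
    simpa using this.symm
  rw [h5]
  refine Submodule.add_mem_sup hu ?_
  have h6 : (⟨v, hv⟩ : W) ∈ Submodule.span K (Set.range b) := by
    rw [b.span_eq]; trivial
  have h7 : (v : M) ∈ (Submodule.span K (Set.range b)).map (A.subtype ∘ₗ W.subtype) :=
    ⟨⟨v, hv⟩, h6, rfl⟩
  rw [Submodule.map_span] at h7
  refine Submodule.span_mono ?_ h7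
  rintro _ ⟨_, ⟨j, rfl⟩, rfl⟩
  exact ⟨e.symm j, by simp⟩

variable (Q : QuiverData) (d : Fin Q.n → ℕ)

theorem sum_proj (m : Carrier Q d K) : ∑ i, proj Q d K i m = m := by
  funext p
  simp [proj, Finset.sum_apply]

theorem governed_antitone {L : ℕ} {x : RepSpace Q d K} {S : Fin (L+1) → Fin Q.n → ℕ}
    {F : Fin (L+2) → Submodule K (Carrier Q d K)} (hF : Governed Q d K L x S F) : Antitone F := by
  rw [Fin.antitone_iff_succ_le]
  exact hF.2.2.1

theorem exists_param {L : ℕ} (deg : Idx Q d → Fin (L+1)) (S : Fin (L+1) → Fin Q.n → ℕ)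
    (hdeg : ∀ l i, #{p : Idx Q d | p.1 = i ∧ deg p = l} = S l i)
    (x : RepSpace Q d K) (F : Fin (L+2) → Submodule K (Carrier Q d K))
    (hF : Governed Q d K L x S F) :
    ∃ y : PIdx Q d → K, (gmat Q d y).det ≠ 0 ∧ phi Q d deg y = x := by
  have hanti := governed_antitone Q d hF
  obtain ⟨h0, h1, h2, h3, h4, h5⟩ := hF
  have hex : ∀ (l : Fin (L+1)) (i : Fin Q.n),
      ∃ w : {p : Idx Q d // p.1 = i ∧ deg p = l} → Carrier Q d K,
        (∀ t, w t ∈ (F l.castSucc).map (proj Q d K i)) ∧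
        (F l.castSucc).map (proj Q d K i) ≤
          (F l.succ).map (proj Q d K i) ⊔ Submodule.span K (Set.range w) := by
    intro l i
    apply exists_compl_family
    · exact Submodule.map_mono (h2 l)
    · rw [Fintype.card_subtype, hdeg l i]
      exact h5 l i
  choose w hw1 hw2 using hex
  let wv : Idx Q d → Carrier Q d K := fun p => w (deg p) p.1 ⟨p, rfl, rfl⟩
  have hwvF : ∀ p, wv p ∈ F (deg p).castSucc := fun p => h3 _ _ (hw1 _ _ _)
  have hwvb : ∀ p q : Idx Q d, p.1 ≠ q.1 → wv q p = 0 := by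
    intro p q hpq
    obtain ⟨m, _, hm⟩ := hw1 (deg q) q.1 ⟨q, rfl, rfl⟩
    have := congrFun hm p
    simp only [proj, LinearMap.coe_mk, AddHom.coe_mk, if_neg hpq] at this
    exact this.symm
  let g : Matrix (Idx Q d) (Idx Q d) K := fun p q => wv q p
  have hg : BlockDiag Q d g := fun p q h => hwvb p q h
  have hgs : ∀ p, Matrix.toLin' g (Pi.single p 1) = wv p := by
    intro p
    rw [Matrix.toLin'_apply, Matrix.mulVec_single_one]
    rfl
  -- image of the standard flag
  have hle : ∀ l : Fin (L+2), (stdF Q d deg K l).map (Matrix.toLin' g) ≤ F l := by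
    rintro l _ ⟨m, hm, rfl⟩
    rw [show m = ∑ p, m p • (Pi.single p 1 : Carrier Q d K) from by
      rw [← pi_eq_sum_univ' m], map_sum]
    refine Submodule.sum_mem _ fun p _ => ?_
    rw [map_smul, hgs]
    by_cases hp : (deg p : ℕ) < l
    · rw [hm p hp, zero_smul]
      exact Submodule.zero_mem _
    · apply Submodule.smul_mem
      refine hanti ?_ (hwvF p)
      rw [Fin.le_def]
      simpa using hp
  have hstd_mono : ∀ l : ℕ, stdF Q d deg K (l+1) ≤ stdF Q d deg K l := by
    intro l m hm p hp
    exact hm p (by omega)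
  have hge : ∀ l : Fin (L+2), F l ≤ (stdF Q d deg K l).map (Matrix.toLin' g) := by
    intro l
    induction l using Fin.reverseInduction with
    | last => rw [h1]; exact bot_le
    | cast l ih =>
      intro m hm
      rw [← sum_proj Q d m]
      refine Submodule.sum_mem _ fun i _ => ?_
      have hm1 := hw2 l i (Submodule.mem_map_of_mem hm)
      have hA : (F l.succ).map (proj Q d K i) ≤
          (stdF Q d deg K (l.castSucc : Fin (L+2))).map (Matrix.toLin' g) := by
        refine (h3 _ i).trans (ih.trans (Submodule.map_mono ?_))
        exact hstd_mono _
      have hB : Submodule.span K (Set.range (w l i)) ≤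
          (stdF Q d deg K (l.castSucc : Fin (L+2))).map (Matrix.toLin' g) := by
        rw [Submodule.span_le]
        rintro _ ⟨⟨p, rfl, rfl⟩, rfl⟩
        refine ⟨Pi.single p 1, ?_, hgs p⟩
        intro q hq
        rw [Pi.single_eq_of_ne]
        rintro rfl
        simp at hq
      exact (sup_le hA hB) hm1
  have hsurj : Function.Surjective (Matrix.toLin' g) := by
    rw [← LinearMap.range_eq_top, eq_top_iff, ← h0]
    exact (hge 0).trans (LinearMap.map_le_range)
  have hinj : Function.Injective (Matrix.toLin' g) := LinearMap.injective_iff_surjective.2 hsurj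
  have hdet : g.det ≠ 0 := by
    have h : Function.Injective g.mulVec := fun u v huv => hinj (by simpa using huv)
    have h' := Matrix.mulVec_injective_iff_isUnit.1 h
    rw [Matrix.isUnit_iff_isUnit_det] at h'
    exact h'.ne_zero
  let M : Fin Q.numArrows → Matrix (Idx Q d) (Idx Q d) K := fun a =>
    (g.det⁻¹ ^ 2) • (g.adjugate * amat Q d x a * g)
  have hMb : ∀ a p q, ¬ (p.1 = Q.tgt a ∧ q.1 = Q.src a) → M a p q = 0 := by
    intro a p q hpq
    simp only [M, Matrix.smul_apply]
    rw [block_conj Q d _ _ _ (blockDiag_adjugate Q d g hg hdet) hg _ _ (amat_block Q d x a) p q hpq,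
      smul_zero]
  have hMd : ∀ a p q, ¬ deg q < deg p → M a p q = 0 := by
    intro a p q hpq
    have hx : arrowMap Q d K x a (wv q) ∈ F (deg q).succ :=
      h4 (deg q) a (Submodule.mem_map_of_mem (hwvF q))
    obtain ⟨m, hm, hmq⟩ := hge _ hx
    have e1 : (g.adjugate * amat Q d x a * g).mulVec (Pi.single q 1) = g.det • m := by
      rw [← Matrix.mulVec_mulVec, ← Matrix.mulVec_mulVec]
      have := hgs q
      rw [Matrix.toLin'_apply] at this
      rw [this]
      rw [toLin_amat, Matrix.toLin'_apply, Matrix.toLin'_apply] at hmq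
      rw [← hmq, Matrix.mulVec_mulVec, Matrix.adjugate_mul]
      simp [Matrix.smul_mulVec]
    have e2 := congrFun e1 p
    rw [Matrix.mulVec_single_one] at e2
    simp only [Matrix.col_apply, Pi.smul_apply] at e2
    simp only [M, Matrix.smul_apply]
    rw [e2, hm p, smul_zero, smul_zero]
    have : ¬ ((deg q : ℕ) < deg p) := hpq
    simp only [Fin.val_succ]
    omega
  let y : PIdx Q d → K := Sum.elim (fun pq => g pq.1 pq.2)
    (fun c => M c.1 ⟨Q.tgt c.1, c.2.1⟩ ⟨Q.src c.1, c.2.2⟩)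
  have hgy : gmat Q d y = g := by
    ext p q
    by_cases h : p.1 = q.1
    · simp [gmat, h, y]
    · simp [gmat, h, hg p q h]
  have hny : npt Q d deg y = fun c => M c.1 ⟨Q.tgt c.1, c.2.1⟩ ⟨Q.src c.1, c.2.2⟩ := by
    funext c
    simp only [npt, y, Sum.elim_inr]
    split_ifs with h
    · rfl
    · rw [hMd _ _ _ h]
  refine ⟨y, by rw [hgy]; exact hdet, ?_⟩
  funext c
  have hM : g * M c.1 * g.adjugate = amat Q d x c.1 := by
    calc g * M c.1 * g.adjugate
        = (g.det⁻¹ ^ 2) • ((g * g.adjugate) * amat Q d x c.1 * (g * g.adjugate)) := by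
          simp only [M, Matrix.mul_smul, Matrix.smul_mul, Matrix.mul_assoc]
      _ = amat Q d x c.1 := by
          rw [Matrix.mul_adjugate]
          simp only [Matrix.smul_mul, Matrix.mul_smul, Matrix.one_mul, Matrix.mul_one, smul_smul]
          rw [show g.det⁻¹ ^ 2 * (g.det * g.det) = 1 by field_simp, one_smul]
  rw [phi, hgy, hny, amat_extract Q d M c.1 (hMb c.1), hM, amat_coord]

/-- A degree function exists for each sequence of dimension vector `d`. -/
theorem exists_deg {L : ℕ} (S : Fin (L+1) → Fin Q.n → ℕ) (hS : hasDimVec S d) :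
    ∃ deg : Idx Q d → Fin (L+1), ∀ l i, #{p : Idx Q d | p.1 = i ∧ deg p = l} = S l i := by
  have e : ∀ i, Nonempty (Fin (d i) ≃ Σ l : Fin (L+1), Fin (S l i)) := by
    intro i
    rw [← Fintype.card_eq]
    simp [hS i]
  let e := fun i => (e i).some
  refine ⟨fun p => (e p.1 p.2).1, fun l i => ?_⟩
  have h : (univ.filter fun p : Idx Q d => p.1 = i ∧ (e p.1 p.2).1 = l) =
      univ.image (fun t : Fin (S l i) => (⟨i, (e i).symm ⟨l, t⟩⟩ : Idx Q d)) := by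
    ext ⟨j, v⟩
    simp only [mem_filter, mem_univ, true_and, mem_image]
    constructor
    · rintro ⟨rfl, rfl⟩
      exact ⟨(e j v).2, by simp⟩
    · rintro ⟨t, ht⟩
      cases ht
      simp
  rw [h, Finset.card_image_of_injective]
  · simp
  · intro s t hst
    simpa using hst

end Param2

end QuiverData

open Finset

namespace QuiverData

section Closed

variable (Q : QuiverData) (d : Fin Q.n → ℕ) {K : Type} [Field K]

theorem zariski_nhd (U : Set (RepSpace Q d K)) (hU : IsOpen U) :
    ∀ x ∈ U, ∃ p : MvPolynomial (Coords Q d) K, MvPolynomial.eval x p ≠ 0 ∧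
      ∀ z : RepSpace Q d K, MvPolynomial.eval z p ≠ 0 → z ∈ U := by
  have hU' : TopologicalSpace.GenerateOpen
    {U : Set (RepSpace Q d K) | ∃ p : MvPolynomial (Coords Q d) K,
      U = {x | MvPolynomial.eval x p ≠ 0}} U := hU
  induction hU' with
  | basic s hs =>
    obtain ⟨p, rfl⟩ := hs
    exact fun x hx => ⟨p, hx, fun z hz => hz⟩
  | univ => exact fun x _ => ⟨1, by simp, fun z _ => trivial⟩
  | inter s t hs ht ihs iht =>
    rintro x ⟨hxs, hxt⟩
    obtain ⟨p, hp, hp'⟩ := ihs hs x hxs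
    obtain ⟨q, hq, hq'⟩ := iht ht x hxt
    refine ⟨p * q, by simp [hp, hq], fun z hz => ?_⟩
    simp only [map_mul, ne_eq, mul_eq_zero, not_or] at hz
    exact ⟨hp' z hz.1, hq' z hz.2⟩
  | sUnion C hC ih =>
    rintro x ⟨s, hs, hxs⟩
    obtain ⟨p, hp, hp'⟩ := ih s hs (hC s hs) x hxs
    exact ⟨p, hp, fun z hz => ⟨s, hs, hp' z hz⟩⟩

theorem zariski_isOpen (p : MvPolynomial (Coords Q d) K) :
    IsOpen {x : RepSpace Q d K | MvPolynomial.eval x p ≠ 0} :=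
  TopologicalSpace.GenerateOpen.basic _ ⟨p, rfl⟩

variable {L : ℕ} (deg : Idx Q d → Fin (L+1)) (S : Fin (L+1) → Fin Q.n → ℕ)

theorem mem_filt_iff (hdeg : ∀ l i, #{p : Idx Q d | p.1 = i ∧ deg p = l} = S l i)
    (x : RepSpace Q d K) : x ∈ FiltSet Q d K L S ↔
      ∃ y : PIdx Q d → K, (gmat Q d y).det ≠ 0 ∧ phi Q d deg y = x := by
  constructor
  · rintro ⟨F, hF⟩
    exact exists_param Q d deg S hdeg x F hF
  · rintro ⟨y, hy, rfl⟩
    exact ⟨_, governed_phi Q d deg S hdeg y hy⟩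

variable (K) in
/-- The generic parametrization. -/
noncomputable def phiX : Coords Q d → MvPolynomial (PIdx Q d) K :=
  phi Q d deg (fun k => MvPolynomial.X k)

variable (K) in
/-- The generic determinant. -/
noncomputable def detX : MvPolynomial (PIdx Q d) K :=
  (gmat Q d (fun k => (MvPolynomial.X k : MvPolynomial (PIdx Q d) K))).det

theorem phiX_eval₂ {F : Type} [Field F] (j : K →+* F) (y : PIdx Q d → F) (c : Coords Q d) :
    MvPolynomial.eval₂Hom j y (phiX Q d K deg c) = phi Q d deg y c := by
  have := phi_map Q d deg (MvPolynomial.eval₂Hom j y)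
    (fun k => (MvPolynomial.X k : MvPolynomial (PIdx Q d) K))
  rw [phiX, ← congrFun this c]
  simp

theorem detX_eval₂ {F : Type} [Field F] (j : K →+* F) (y : PIdx Q d → F) :
    MvPolynomial.eval₂Hom j y (detX Q d K) = (gmat Q d y).det := by
  have := det_gmat_map Q d (MvPolynomial.eval₂Hom j y)
    (fun k => (MvPolynomial.X k : MvPolynomial (PIdx Q d) K))
  rw [detX, ← this]
  simp

theorem eval_bind_phiX (y : PIdx Q d → K) (p : MvPolynomial (Coords Q d) K) :
    MvPolynomial.eval y (MvPolynomial.bind₁ (phiX Q d K deg) p) =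
      MvPolynomial.eval (phi Q d deg y) p := by
  have h : MvPolynomial.eval (phi Q d deg y) = (MvPolynomial.eval y).comp
      (MvPolynomial.bind₁ (phiX Q d K deg)).toRingHom := by
    apply MvPolynomial.ringHom_ext
    · intro r; simp
    · intro c
      have := phiX_eval₂ Q d deg (RingHom.id K) y c
      show MvPolynomial.eval (phi Q d deg y) (MvPolynomial.X c) =
        MvPolynomial.eval y (MvPolynomial.bind₁ (phiX Q d K deg) (MvPolynomial.X c))
      rw [MvPolynomial.eval_X, MvPolynomial.bind₁_X_right]
      exact this.symm
  rw [h]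
  rfl

theorem detX_ne_zero : detX Q d K ≠ 0 := by
  intro h
  have := detX_eval₂ Q d (RingHom.id K) (fun k : PIdx Q d => (Sum.elim
    (fun pq : Idx Q d × Idx Q d => if pq.1 = pq.2 then (1 : K) else 0) (fun _ => 0) k))
  rw [h, map_zero] at this
  have hg : gmat Q d (fun k : PIdx Q d => (Sum.elim
    (fun pq : Idx Q d × Idx Q d => if pq.1 = pq.2 then (1 : K) else 0) (fun _ => 0) k)) = 1 := by
    ext p q
    by_cases hpq : p = q
    · subst hpq; simp [gmat]
    · simp [gmat, hpq]
  rw [hg, Matrix.det_one] at this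
  exact zero_ne_one this

theorem irred_filt [IsAlgClosed K] (hS : hasDimVec S d) :
    IsIrreducible (FiltSet Q d K L S : Set (RepSpace Q d K)) := by
  have : Infinite K := inferInstance
  obtain ⟨deg, hdeg⟩ := exists_deg Q d S hS
  have key : ∀ p : MvPolynomial (PIdx Q d) K, p ≠ 0 → ∃ y, MvPolynomial.eval y p ≠ 0 := by
    intro p hp
    by_contra h
    push Not at h
    exact hp (MvPolynomial.funext (fun y => by rw [h y, map_zero]))
  have hev : ∀ y, MvPolynomial.eval y (detX Q d K) = (gmat Q d y).det := fun y =>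
    detX_eval₂ Q d (RingHom.id K) y
  constructor
  · obtain ⟨y, hy⟩ := key _ (detX_ne_zero Q d (K := K))
    exact ⟨_, (mem_filt_iff Q d deg S hdeg _).2 ⟨y, by rw [← hev]; exact hy, rfl⟩⟩
  · rintro U V hU hV ⟨x, hxF, hxU⟩ ⟨x', hxF', hxV⟩
    obtain ⟨p, hp, hp'⟩ := zariski_nhd Q d U hU x hxU
    obtain ⟨q, hq, hq'⟩ := zariski_nhd Q d V hV x' hxV
    obtain ⟨y, hy, rfl⟩ := (mem_filt_iff Q d deg S hdeg _).1 hxF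
    obtain ⟨y', hy', rfl⟩ := (mem_filt_iff Q d deg S hdeg _).1 hxF'
    have h1 : MvPolynomial.bind₁ (phiX Q d K deg) p ≠ 0 := by
      intro h
      rw [← eval_bind_phiX, h, map_zero] at hp
      exact hp rfl
    have h2 : MvPolynomial.bind₁ (phiX Q d K deg) q ≠ 0 := by
      intro h
      rw [← eval_bind_phiX, h, map_zero] at hq
      exact hq rfl
    obtain ⟨z, hz⟩ := key _ (mul_ne_zero (mul_ne_zero h1 h2) (detX_ne_zero Q d (K := K)))
    simp only [map_mul, ne_eq, mul_eq_zero, not_or, eval_bind_phiX, hev] at hz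
    exact ⟨phi Q d deg z, (mem_filt_iff Q d deg S hdeg _).2 ⟨z, hz.2, rfl⟩,
      hp' _ hz.1.1, hq' _ hz.1.2⟩

theorem descent [IsAlgClosed K] (hdeg : ∀ l i, #{p : Idx Q d | p.1 = i ∧ deg p = l} = S l i)
    {F : Type} [Field F] (j : K →+* F) (x : RepSpace Q d K)
    (h : (fun c => j (x c)) ∈ FiltSet Q d F L S) : x ∈ FiltSet Q d K L S := by
  obtain ⟨y, hy, hyx⟩ := (mem_filt_iff Q d deg S hdeg _).1 h
  let ρ : MvPolynomial (PIdx Q d) K →ₐ[K] MvPolynomial (Option (PIdx Q d)) K :=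
    MvPolynomial.rename some
  let I : Ideal (MvPolynomial (Option (PIdx Q d)) K) := Ideal.span
    (insert (ρ (detX Q d K) * MvPolynomial.X none - 1)
      (Set.range fun c => ρ (phiX Q d K deg c) - MvPolynomial.C (x c)))
  let ψ : MvPolynomial (Option (PIdx Q d)) K →+* F :=
    MvPolynomial.eval₂Hom j (fun o => o.elim ((gmat Q d y).det)⁻¹ y)
  have hψρ : ∀ p, ψ (ρ p) = MvPolynomial.eval₂Hom j y p := by
    intro p
    simp only [ψ, ρ, MvPolynomial.coe_eval₂Hom, MvPolynomial.eval₂_rename]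
    rfl
  have hI : I ≤ RingHom.ker ψ := by
    rw [Ideal.span_le]
    rintro _ (rfl | ⟨c, rfl⟩)
    · rw [SetLike.mem_coe, RingHom.mem_ker, map_sub, map_mul, hψρ, detX_eval₂]
      simp [ψ, hy]
    · rw [SetLike.mem_coe, RingHom.mem_ker, map_sub, hψρ, phiX_eval₂, hyx]
      simp [ψ]
  have hIt : I ≠ ⊤ := by
    intro ht
    have h1 : (1 : MvPolynomial (Option (PIdx Q d)) K) ∈ RingHom.ker ψ := hI (by rw [ht]; trivial)
    rw [RingHom.mem_ker, map_one] at h1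
    exact one_ne_zero h1
  obtain ⟨m, hm, hIm⟩ := I.exists_le_maximal hIt
  obtain ⟨z, rfl⟩ := MvPolynomial.isMaximal_iff_eq_vanishingIdeal_singleton.1 hm
  have hz : ∀ p ∈ I, MvPolynomial.eval z p = 0 := by
    intro p hp
    have := hIm hp
    rw [MvPolynomial.mem_vanishingIdeal_singleton_iff] at this
    simpa [MvPolynomial.aeval_eq_eval] using this
  have hzρ : ∀ p, MvPolynomial.eval z (ρ p) =
      MvPolynomial.eval₂Hom (RingHom.id K) (fun k => z (some k)) p := by
    intro p
    simp only [ρ, MvPolynomial.eval_rename]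
    rfl
  refine (mem_filt_iff Q d deg S hdeg _).2 ⟨fun k => z (some k), ?_, ?_⟩
  · have := hz _ (Ideal.subset_span (Set.mem_insert _ _))
    rw [map_sub, map_mul, hzρ, detX_eval₂] at this
    intro h0
    rw [h0] at this
    simp at this
  · funext c
    have := hz _ (Ideal.subset_span (Set.mem_insert_of_mem _ ⟨c, rfl⟩))
    simp only [map_sub, hzρ, phiX_eval₂, MvPolynomial.eval_C] at this
    exact sub_eq_zero.1 this

theorem isClosed_filt [IsAlgClosed K] (hS : hasDimVec S d) :
    IsClosed (FiltSet Q d K L S : Set (RepSpace Q d K)) := by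
  obtain ⟨deg, hdeg⟩ := exists_deg Q d S hS
  rw [← closure_subset_iff_isClosed]
  intro x hx
  let B := MvPolynomial (PIdx Q d) K
  let E := FractionRing B
  let f : MvPolynomial (Coords Q d) K →+* B := (MvPolynomial.bind₁ (phiX Q d K deg)).toRingHom
  have hf : ∀ p, f p = 0 → MvPolynomial.eval x p = 0 := by
    intro p hp
    by_contra hne
    obtain ⟨z, hz, hzF⟩ := mem_closure_iff.1 hx _ (zariski_isOpen Q d p) hne
    obtain ⟨y, hy, rfl⟩ := (mem_filt_iff Q d deg S hdeg _).1 hzF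
    apply hz
    rw [← eval_bind_phiX]
    show MvPolynomial.eval y (f p) = 0
    rw [hp, map_zero]
  let φ : MvPolynomial (Coords Q d) K →+* E := (algebraMap B E).comp f
  have hφ : ∀ p, φ p = 0 → MvPolynomial.eval x p = 0 := by
    intro p hp
    apply hf
    exact (IsFractionRing.injective B E) (by rw [map_zero]; exact hp)
  let I : Ideal φ.range := (RingHom.ker (MvPolynomial.eval x)).map φ.rangeRestrict
  have hI : I ≠ ⊤ := by
    intro ht
    have h1 : (1 : φ.range) ∈ I := by rw [ht]; trivial
    obtain ⟨p, hp, hp1⟩ := (Ideal.mem_map_iff_of_surjective _ φ.rangeRestrict_surjective).1 h1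
    have h2 : φ (1 - p) = 0 := by
      have : φ p = 1 := congrArg Subtype.val hp1
      rw [map_sub, this, map_one, sub_self]
    have h3 := hφ _ h2
    rw [map_sub, (RingHom.mem_ker).1 hp] at h3
    simp at h3
  obtain ⟨V, hV1, hV2⟩ := Ideal.image_subset_nonunits_valuationSubring I hI
  have hmem : ∀ p, φ p ∈ V := fun p => hV1 ⟨p, rfl⟩
  let φV : MvPolynomial (Coords Q d) K →+* V := φ.codRestrict V hmem
  let j : K →+* IsLocalRing.ResidueField V :=
    ((IsLocalRing.residue V).comp φV).comp MvPolynomial.C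
  have hres : ∀ c, IsLocalRing.residue V (φV (MvPolynomial.X c)) = j (x c) := by
    intro c
    rw [← sub_eq_zero]
    show IsLocalRing.residue V (φV (MvPolynomial.X c)) -
      IsLocalRing.residue V (φV (MvPolynomial.C (x c))) = 0
    rw [← map_sub, ← map_sub, IsLocalRing.residue_eq_zero_iff]
    have h1 : φ.rangeRestrict (MvPolynomial.X c - MvPolynomial.C (x c)) ∈ I :=
      Ideal.mem_map_of_mem _ (by rw [RingHom.mem_ker]; simp)
    have h2 : φ (MvPolynomial.X c - MvPolynomial.C (x c)) ∈ V.nonunits := hV2 ⟨_, h1, rfl⟩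
    rw [IsLocalRing.mem_maximalIdeal]
    exact (V.coe_mem_nonunits_iff).1 h2
  apply descent Q d deg S hdeg j x
  -- the generic point
  let yE : PIdx Q d → E := fun k => algebraMap B E (MvPolynomial.X k)
  have hdetE : (gmat Q d yE).det ≠ 0 := by
    rw [det_gmat_map Q d (algebraMap B E)]
    intro h0
    exact detX_ne_zero Q d (K := K) ((IsFractionRing.injective B E) (by rw [map_zero]; exact h0))
  have hgov := governed_phi Q d deg S hdeg yE hdetE
  have hpt : phi Q d deg yE = fun c => ((φV (MvPolynomial.X c) : V) : E) := by
    rw [phi_map Q d deg (algebraMap B E)]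
    funext c
    show _ = algebraMap B E (f (MvPolynomial.X c))
    congr 1
    show _ = MvPolynomial.bind₁ (phiX Q d K deg) (MvPolynomial.X c)
    rw [MvPolynomial.bind₁_X_right]
    rfl
  rw [hpt] at hgov
  have := governed_reduce V Q d L _ S _ hgov
  simp only [hres] at this
  exact ⟨_, this⟩

end Closed

end QuiverData

open Finset

namespace QuiverData

section Rad

variable (Q : QuiverData) (d : Fin Q.n → ℕ) {K : Type} [Field K] {L : ℕ}

theorem wordMap_cons (x : RepSpace Q d K) (a) (w : List (Fin Q.numArrows)) (m) :
    wordMap Q d K x (a :: w) m = arrowMap Q d K x a (wordMap Q d K x w m) := by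
  simp [wordMap]

theorem wordMap_mem_radPow (x : RepSpace Q d K) (w : List (Fin Q.numArrows)) (l : ℕ)
    (hw : w.length = l) (m) : wordMap Q d K x w m ∈ radPow Q d K x l :=
  (le_iSup (fun w : {w : List (Fin Q.numArrows) // w.length = l} =>
    LinearMap.range (wordMap Q d K x w.1)) ⟨w, hw⟩) ⟨m, rfl⟩

theorem radPow_le_iff (x : RepSpace Q d K) (l : ℕ) (N : Submodule K (Carrier Q d K)) :
    radPow Q d K x l ≤ N ↔ ∀ w : List (Fin Q.numArrows), w.length = l →
      ∀ m, wordMap Q d K x w m ∈ N := by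
  constructor
  · intro h w hw m
    exact h (wordMap_mem_radPow Q d x w l hw m)
  · intro h
    refine iSup_le ?_
    rintro ⟨w, hw⟩ _ ⟨m, rfl⟩
    exact h w hw m

theorem radPow_zero (x : RepSpace Q d K) : radPow Q d K x 0 = ⊤ := by
  rw [eq_top_iff]
  intro m _
  exact wordMap_mem_radPow Q d x [] 0 rfl m

theorem radPow_succ_le (x : RepSpace Q d K) (l : ℕ) :
    radPow Q d K x (l+1) ≤ radPow Q d K x l := by
  rw [radPow_le_iff]
  intro w hw m
  rcases List.eq_nil_or_concat w with rfl | ⟨w', b, rfl⟩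
  · simp at hw
  · have : wordMap Q d K x (w' ++ [b]) m = wordMap Q d K x w' (arrowMap Q d K x b m) := by
      simp [wordMap]
    simp only [List.concat_eq_append] at hw ⊢
    rw [this]
    apply wordMap_mem_radPow
    simpa using hw

theorem map_arrow_radPow (x : RepSpace Q d K) (l : ℕ) (a) :
    (radPow Q d K x l).map (arrowMap Q d K x a) ≤ radPow Q d K x (l+1) := by
  rw [Submodule.map_le_iff_le_comap, radPow_le_iff]
  intro w hw m
  rw [Submodule.mem_comap, ← wordMap_cons]
  apply wordMap_mem_radPow
  simp [hw]

theorem map_proj_radPow (x : RepSpace Q d K) (l : ℕ) (i) :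
    (radPow Q d K x l).map (proj Q d K i) ≤ radPow Q d K x l := by
  cases l with
  | zero => rw [radPow_zero]; exact le_top
  | succ l =>
    rw [Submodule.map_le_iff_le_comap, radPow_le_iff]
    intro w hw m
    rw [Submodule.mem_comap]
    cases w with
    | nil => simp at hw
    | cons a w =>
      by_cases hi : i = Q.tgt a
      · have : proj Q d K i (wordMap Q d K x (a :: w) m) = wordMap Q d K x (a :: w) m := by
          rw [wordMap_cons]
          funext p
          by_cases hp : p.1 = i
          · simp [proj, hp]
          · have : ¬ p.1 = Q.tgt a := hi ▸ hp
            simp [proj, hp, arrowMap, this]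
        rw [this]
        exact wordMap_mem_radPow Q d x _ _ hw m
      · have : proj Q d K i (wordMap Q d K x (a :: w) m) = 0 := by
          rw [wordMap_cons]
          funext p
          by_cases hp : p.1 = i
          · have : ¬ p.1 = Q.tgt a := fun h => hi (hp.symm.trans h)
            simp [proj, arrowMap, this]
          · simp [proj, hp]
        rw [this]
        exact Submodule.zero_mem _

theorem vdim_mono {N N' : Submodule K (Carrier Q d K)} (h : N ≤ N') (i) :
    vdim Q d K N i ≤ vdim Q d K N' i :=
  Submodule.finrank_mono (Submodule.map_mono h)

theorem governed_rad (x : RepSpace Q d K) (hx : x ∈ TruncRepVar Q d K L) :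
    Governed Q d K L x (radLayering Q d K L x) (fun l => radPow Q d K x l) := by
  refine ⟨radPow_zero Q d x, ?_, fun l => radPow_succ_le Q d x l,
    fun l i => map_proj_radPow Q d x l i, fun l a => map_arrow_radPow Q d x l a, ?_⟩
  · show radPow Q d K x (L+1) = ⊥
    rw [eq_bot_iff, radPow_le_iff]
    intro w hw m
    rw [hx w hw]
    simp
  · intro l i
    have := vdim_mono Q d (radPow_succ_le Q d x l) i
    simp only [radLayering, Fin.val_castSucc, Fin.val_succ]
    omega

theorem radPow_le_governed {x : RepSpace Q d K} {S : Fin (L+1) → Fin Q.n → ℕ}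
    {F : Fin (L+2) → Submodule K (Carrier Q d K)} (hF : Governed Q d K L x S F) (l : Fin (L+2)) :
    radPow Q d K x l ≤ F l := by
  induction l using Fin.induction with
  | zero => rw [hF.1]; exact le_top
  | succ l ih =>
    rw [radPow_le_iff]
    intro w hw m
    cases w with
    | nil => simp at hw
    | cons a w =>
      rw [wordMap_cons]
      refine hF.2.2.2.2.1 l a (Submodule.mem_map_of_mem (ih ?_))
      apply wordMap_mem_radPow
      simpa using hw

theorem governed_trunc {x : RepSpace Q d K} {S : Fin (L+1) → Fin Q.n → ℕ}
    (h : x ∈ FiltSet Q d K L S) : x ∈ TruncRepVar Q d K L := by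
  obtain ⟨F, hF⟩ := h
  intro w hw
  have h1 := radPow_le_governed Q d hF (Fin.last (L+1))
  rw [hF.2.1, radPow_le_iff] at h1
  apply LinearMap.ext
  intro m
  simpa using h1 w hw m

theorem vdim_bot (i) : vdim Q d K ⊥ i = 0 := by
  simp [vdim]

theorem vdim_top (i) : vdim Q d K ⊤ i = d i := by
  rw [vdim, finrank_supp (univ.filter fun p : Idx Q d => p.1 = i)]
  · have : (univ.filter fun p : Idx Q d => p.1 = i) =
        univ.image (fun t : Fin (d i) => (⟨i, t⟩ : Idx Q d)) := by
      ext ⟨j, v⟩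
      simp only [mem_filter, mem_univ, true_and, mem_image]
      constructor
      · rintro rfl
        exact ⟨v, rfl⟩
      · rintro ⟨t, ht⟩
        cases ht
        rfl
    rw [this, Finset.card_image_of_injective]
    · simp
    · intro s t hst
      simpa using hst
  · intro m
    constructor
    · rintro ⟨m, _, rfl⟩ p hp
      simp only [mem_filter, mem_univ, true_and] at hp
      simp [proj, hp]
    · intro h
      refine ⟨m, trivial, ?_⟩
      funext p
      by_cases hp : p.1 = i
      · simp [proj, hp]
      · simp [proj, hp, h p (by simp [hp])]

theorem vdim_eq_of_governed {x y : RepSpace Q d K} {S : Fin (L+1) → Fin Q.n → ℕ}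
    {F G : Fin (L+2) → Submodule K (Carrier Q d K)} (hF : Governed Q d K L x S F)
    (hG : Governed Q d K L y S G) (l : Fin (L+2)) (i) :
    vdim Q d K (F l) i = vdim Q d K (G l) i := by
  induction l using Fin.reverseInduction with
  | last => rw [hF.2.1, hG.2.1]
  | cast l ih => rw [hF.2.2.2.2.2 l i, hG.2.2.2.2.2 l i, ih]

theorem telescope (n : ℕ) (f : Fin (n+1) → ℕ) (s : Fin n → ℕ)
    (h : ∀ l : Fin n, f l.castSucc = s l + f l.succ) : f 0 = ∑ l, s l + f (Fin.last n) := by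
  induction n with
  | zero => simp
  | succ n ih =>
    have h0 := h 0
    have h1 : f (Fin.succ 0) = ∑ l, s (Fin.succ l) + f (Fin.last (n+1)) :=
      ih (fun l => f l.succ) (fun l => s l.succ) (fun l => h l.succ)
    have h0' : f 0 = s 0 + f (Fin.succ 0) := h0
    rw [Fin.sum_univ_succ, h0', h1, add_assoc]

theorem hasDimVec_of_governed {x : RepSpace Q d K} {S : Fin (L+1) → Fin Q.n → ℕ}
    {F : Fin (L+2) → Submodule K (Carrier Q d K)} (hF : Governed Q d K L x S F) :
    hasDimVec S d := by
  intro i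
  have := telescope (L+1) (fun l => vdim Q d K (F l) i) (fun l => S l i)
    (fun l => hF.2.2.2.2.2 l i)
  simp only [hF.1, hF.2.1, vdim_top, vdim_bot] at this
  omega

theorem eq_of_vdim_eq {N N' : Submodule K (Carrier Q d K)} (h : N ≤ N')
    (hN : ∀ i, N.map (proj Q d K i) ≤ N)
    (hv : ∀ i, vdim Q d K N i = vdim Q d K N' i) : N' = N := by
  refine le_antisymm ?_ h
  intro m hm
  rw [← sum_proj Q d m]
  refine Submodule.sum_mem _ fun i _ => hN i ?_
  rw [Submodule.eq_of_le_of_finrank_eq (Submodule.map_mono h) (hv i)]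
  exact Submodule.mem_map_of_mem hm

theorem layering_antisymm {x z : RepSpace Q d K} (hx : x ∈ TruncRepVar Q d K L)
    (hz : z ∈ TruncRepVar Q d K L)
    (h1 : x ∈ FiltSet Q d K L (radLayering Q d K L z))
    (h2 : z ∈ FiltSet Q d K L (radLayering Q d K L x)) :
    radLayering Q d K L x = radLayering Q d K L z := by
  obtain ⟨F, hF⟩ := h1
  obtain ⟨G, hG⟩ := h2
  have gx := governed_rad Q d x hx
  have gz := governed_rad Q d z hz
  have hv : ∀ (l : Fin (L+2)) i, vdim Q d K (radPow Q d K x l) i =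
      vdim Q d K (radPow Q d K z l) i := by
    intro l i
    have a1 := vdim_mono Q d (radPow_le_governed Q d hF l) i
    have a2 : vdim Q d K (F l) i = vdim Q d K (radPow Q d K z l) i :=
      vdim_eq_of_governed Q d hF gz l i
    have a3 := vdim_mono Q d (radPow_le_governed Q d hG l) i
    have a4 : vdim Q d K (G l) i = vdim Q d K (radPow Q d K x l) i :=
      vdim_eq_of_governed Q d hG gx l i
    omega
  funext l i
  have e1 := hv l.castSucc i
  have e2 := hv l.succ i
  simp only [Fin.val_castSucc, Fin.val_succ] at e1 e2
  simp only [radLayering, e1, e2]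

theorem layering_antisymm' {x z : RepSpace Q d K} {S S' : Fin (L+1) → Fin Q.n → ℕ}
    (hx : x ∈ TruncRepVar Q d K L) (hz : z ∈ TruncRepVar Q d K L)
    (hxS : radLayering Q d K L x = S) (hzS : radLayering Q d K L z = S')
    (h1 : x ∈ FiltSet Q d K L S') (h2 : z ∈ FiltSet Q d K L S) : S = S' := by
  subst hxS hzS
  exact layering_antisymm Q d hx hz h1 h2

theorem finite_hasDimVec : {S : Fin (L+1) → Fin Q.n → ℕ | hasDimVec S d}.Finite := by
  refine (Set.finite_Icc (0 : Fin (L+1) → Fin Q.n → ℕ) (fun _ i => d i)).subset ?_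
  intro S hS
  refine ⟨fun l i => Nat.zero_le _, fun l i => ?_⟩
  show S l i ≤ d i
  rw [← hS i]
  exact Finset.single_le_sum (f := fun l => S l i) (fun _ _ => Nat.zero_le _) (Finset.mem_univ l)

/-- An irreducible set covered by finitely many closed sets lies in one of them. -/
theorem irred_cover {X α : Type*} [TopologicalSpace X] {Z : Set X} (hZ : IsIrreducible Z)
    {A : Set α} (hA : A.Finite) (C : α → Set X) (hC : ∀ a ∈ A, IsClosed (C a))
    (hcov : ∀ z ∈ Z, ∃ a ∈ A, z ∈ C a) : ∃ a ∈ A, Z ⊆ C a := by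
  classical
  obtain ⟨z, hz, hZz⟩ := isIrreducible_iff_sUnion_isClosed.1 hZ (hA.toFinset.image C)
    (by
      intro z hz
      simp only [Finset.mem_image, Set.Finite.mem_toFinset] at hz
      obtain ⟨a, ha, rfl⟩ := hz
      exact hC a ha)
    (by
      intro z hz
      obtain ⟨a, ha, hza⟩ := hcov z hz
      exact ⟨C a, by simpa using ⟨a, ha, rfl⟩, hza⟩)
  simp only [Finset.mem_image, Set.Finite.mem_toFinset] at hz
  obtain ⟨a, ha, rfl⟩ := hz
  exact ⟨a, ha, hZz⟩

variable (K L) in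
/-- The realizable sequences. -/
def RealizableSet : Set (Fin (L+1) → Fin Q.n → ℕ) :=
  {S | ∃ y ∈ TruncRepVar Q d K L, radLayering Q d K L y = S}

theorem real_hasDimVec {S : Fin (L+1) → Fin Q.n → ℕ} (h : S ∈ RealizableSet Q d K L) :
    hasDimVec S d := by
  obtain ⟨y, hy, rfl⟩ := h
  exact hasDimVec_of_governed Q d (governed_rad Q d y hy)

theorem finite_real : (RealizableSet Q d K L).Finite :=
  (finite_hasDimVec Q d).subset fun _ h => real_hasDimVec Q d h

variable (K) in
/-- `Filt S` as a subset of `Rep_d`. -/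
def FiltX (S : Fin (L+1) → Fin Q.n → ℕ) : Set (TruncV Q d K L) :=
  {x | x.1 ∈ FiltSet Q d K L S}

variable (K) in
/-- `Rep S` as a subset of `Rep_d`. -/
def RepX (S : Fin (L+1) → Fin Q.n → ℕ) : Set (TruncV Q d K L) :=
  {x | radLayering Q d K L x.1 = S}

theorem mem_filtX_iff {S : Fin (L+1) → Fin Q.n → ℕ} {x : TruncV Q d K L}
    (h : x ∈ FiltX Q d K S) : x.1 ∈ FiltSet Q d K L S := h

theorem mem_filtX_self (x : TruncV Q d K L) : x ∈ FiltX Q d K (radLayering Q d K L x.1) :=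
  ⟨_, governed_rad Q d x.1 x.2⟩

theorem repX_subset_filtX (S : Fin (L+1) → Fin Q.n → ℕ) : RepX Q d K S ⊆ FiltX Q d K S := by
  rintro x rfl
  exact mem_filtX_self Q d x

variable [IsAlgClosed K]

theorem isClosed_filtX {S : Fin (L+1) → Fin Q.n → ℕ} (h : S ∈ RealizableSet Q d K L) :
    IsClosed (FiltX Q d K S) :=
  (isClosed_filt Q d S (real_hasDimVec Q d h)).preimage continuous_subtype_val

theorem irred_filtX {S : Fin (L+1) → Fin Q.n → ℕ} (h : S ∈ RealizableSet Q d K L) :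
    IsIrreducible (FiltX Q d K S) := by
  have hi := irred_filt (K := K) Q d S (real_hasDimVec Q d h)
  constructor
  · obtain ⟨x, hx⟩ := hi.1
    exact ⟨⟨x, governed_trunc Q d hx⟩, hx⟩
  · rintro U V hU hV ⟨x, hxF, hxU⟩ ⟨x', hxF', hxV⟩
    obtain ⟨U', hU', rfl⟩ := isOpen_induced_iff.1 hU
    obtain ⟨V', hV', rfl⟩ := isOpen_induced_iff.1 hV
    obtain ⟨z, hz, hzU, hzV⟩ := hi.2 U' V' hU' hV' ⟨x.1, hxF, hxU⟩ ⟨x'.1, hxF', hxV⟩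
    exact ⟨⟨z, governed_trunc Q d hz⟩, hz, hzU, hzV⟩

theorem closure_repX {S : Fin (L+1) → Fin Q.n → ℕ} (h : S ∈ RealizableSet Q d K L) :
    closure (RepX Q d K S) = FiltX Q d K S := by
  classical
  apply le_antisymm
  · exact closure_minimal (repX_subset_filtX Q d S) (isClosed_filtX Q d h)
  · obtain ⟨x0, hx0, hx0S⟩ := id h
    let A : Set (Fin (L+1) → Fin Q.n → ℕ) :=
      {S' | S' = S ∨ ∃ z ∈ FiltX Q d K S, radLayering Q d K L z.1 = S'}
    have hAR : A ⊆ RealizableSet Q d K L := by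
      rintro S' (rfl | ⟨z, _, hz⟩)
      · exact h
      · exact ⟨z.1, z.2, hz⟩
    obtain ⟨S', hS', hsub⟩ := irred_cover (irred_filtX Q d h) ((finite_real Q d).subset hAR)
      (fun S' => if S' = S then closure (RepX Q d K S) else FiltX Q d K S')
      (by
        intro S' hS'
        by_cases hS : S' = S
        · simp [hS]
        · simp only [hS, if_false]
          exact isClosed_filtX Q d (hAR hS'))
      (by
        intro z hz
        refine ⟨radLayering Q d K L z.1, Or.inr ⟨z, hz, rfl⟩, ?_⟩
        by_cases hS : radLayering Q d K L z.1 = S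
        · simp only [hS, if_true]
          exact subset_closure hS
        · simp only [hS, if_false]
          exact mem_filtX_self Q d z)
    by_cases hS : S' = S
    · simpa [hS] using hsub
    · exfalso
      simp only [hS, if_false] at hsub
      rcases hS' with h' | ⟨z, hz, hzS⟩
      · exact hS h'
      · apply hS
        have hx : (⟨x0, hx0⟩ : TruncV Q d K L) ∈ FiltX Q d K S :=
          repX_subset_filtX Q d S hx0S
        have a1 := mem_filtX_iff Q d (hsub hx)
        exact (layering_antisymm' Q d hx0 z.2 hx0S hzS a1 hz).symm

theorem gamma_finite (x : RepSpace Q d K) : {S : Fin (L+1) → Fin Q.n → ℕ |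
    (∃ y ∈ TruncRepVar Q d K L, radLayering Q d K L y = S) ∧
      ∃ F, Governed Q d K L x S F}.Finite :=
  (finite_real (K := K) (L := L) Q d).subset fun _ h => h.1

theorem gamma_eq_one_iff (x : RepSpace Q d K) (hx : x ∈ TruncRepVar Q d K L) :
    gammaCount Q d K L (TruncRepVar Q d K L) x = 1 ↔
      ∀ S' ∈ RealizableSet Q d K L, x ∈ FiltSet Q d K L S' → S' = radLayering Q d K L x := by
  have hself : radLayering Q d K L x ∈ {S : Fin (L+1) → Fin Q.n → ℕ |
    (∃ y ∈ TruncRepVar Q d K L, radLayering Q d K L y = S) ∧ ∃ F, Governed Q d K L x S F} :=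
    ⟨⟨x, hx, rfl⟩, _, governed_rad Q d x hx⟩
  rw [gammaCount, Set.ncard_eq_one]
  constructor
  · rintro ⟨a, ha⟩ S' h1 h2
    have h3 : S' ∈ ({a} : Set _) := ha ▸ ⟨h1, h2⟩
    rw [ha] at hself
    rw [Set.mem_singleton_iff.1 h3, Set.mem_singleton_iff.1 hself]
  · intro h
    refine ⟨radLayering Q d K L x, Set.eq_singleton_iff_unique_mem.2 ⟨hself, ?_⟩⟩
    rintro S' ⟨h1, h2⟩
    exact h S' h1 h2

theorem gamma_closed (m : ℕ) : IsClosed {x : TruncV Q d K L |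
        m ≤ gammaCount Q d K L (TruncRepVar Q d K L) x.1} := by
  classical
  have hfin := finite_real (K := K) (L := L) Q d
  have e : {x : TruncV Q d K L | m ≤ gammaCount Q d K L (TruncRepVar Q d K L) x.1} =
      ⋃ T ∈ hfin.toFinset.powersetCard m, ⋂ S ∈ T, FiltX Q d K S := by
    ext x
    simp only [Set.mem_ofPred_eq, Set.mem_iUnion, Set.mem_iInter, Finset.mem_powersetCard,
      exists_prop]
    have hx := gamma_finite (L := L) Q d x.1
    rw [gammaCount, Set.ncard_eq_toFinset_card _ hx]
    constructor
    · intro hm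
      obtain ⟨T, hT, hTm⟩ := Finset.exists_subset_card_eq hm
      refine ⟨T, ⟨fun S hS => ?_, hTm⟩, fun S hS => ?_⟩
      · exact hfin.mem_toFinset.2 ((hx.mem_toFinset.1 (hT hS)).1)
      · exact (hx.mem_toFinset.1 (hT hS)).2
    · rintro ⟨T, ⟨hT, rfl⟩, hTx⟩
      apply Finset.card_le_card
      intro S hS
      exact hx.mem_toFinset.2 ⟨hfin.mem_toFinset.1 (hT hS), hTx S hS⟩
  rw [e]
  refine isClosed_biUnion_finset fun T hT => isClosed_biInter fun S hS => ?_
  exact isClosed_filtX Q d (hfin.mem_toFinset.1 ((Finset.mem_powersetCard.1 hT).1 hS))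

theorem component_iff {S : Fin (L+1) → Fin Q.n → ℕ} (h : S ∈ RealizableSet Q d K L) :
    closure (RepX Q d K S) ∈ irreducibleComponents (TruncV Q d K L) ↔
      ∃ x ∈ TruncRepVar Q d K L, radLayering Q d K L x = S ∧
        gammaCount Q d K L (TruncRepVar Q d K L) x = 1 := by
  constructor
  · intro hc
    by_contra hno
    push Not at hno
    have hirr : IsIrreducible (RepX Q d K S) := by
      rw [← isIrreducible_iff_closure]
      exact hc.1
    obtain ⟨S', ⟨hS'R, hS'S⟩, hsub⟩ := irred_cover hirr
      (A := {S' | S' ∈ RealizableSet Q d K L ∧ S' ≠ S}) ((finite_real Q d).subset fun _ h => h.1)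
      (fun S' => FiltX Q d K S') (fun S' hS' => isClosed_filtX Q d hS'.1)
      (by
        intro x hx
        have := hno x.1 x.2 hx
        rw [ne_eq, gamma_eq_one_iff Q d x.1 x.2] at this
        push Not at this
        obtain ⟨S', h1, h2, h3⟩ := this
        refine ⟨S', ⟨h1, ?_⟩, h2⟩
        rwa [hx] at h3)
    have hle : closure (RepX Q d K S) ⊆ FiltX Q d K S' :=
      closure_minimal hsub (isClosed_filtX Q d hS'R)
    have hge : FiltX Q d K S' ⊆ closure (RepX Q d K S) := hc.2 (irred_filtX Q d hS'R) hle
    rw [closure_repX Q d h] at hge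
    obtain ⟨x, hx, hxS⟩ := id h
    obtain ⟨z, hz, hzS⟩ := id hS'R
    have b1 : (⟨x, hx⟩ : TruncV Q d K L) ∈ RepX Q d K S := hxS
    have b2 : (⟨z, hz⟩ : TruncV Q d K L) ∈ RepX Q d K S' := hzS
    have a1 := mem_filtX_iff Q d (hsub b1)
    have a2 := mem_filtX_iff Q d (hge (repX_subset_filtX Q d S' b2))
    exact hS'S (layering_antisymm' Q d hx hz hxS hzS a1 a2).symm
  · rintro ⟨x, hx, hxS, hg⟩
    rw [gamma_eq_one_iff Q d x hx] at hg
    rw [closure_repX Q d h]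
    refine ⟨irred_filtX Q d h, ?_⟩
    intro Z hZ hle
    obtain ⟨S', hS', hsub⟩ := irred_cover hZ (finite_real (K := K) (L := L) Q d)
      (fun S' => FiltX Q d K S') (fun S' hS' => isClosed_filtX Q d hS')
      (fun z _ => ⟨_, ⟨z.1, z.2, rfl⟩, mem_filtX_self Q d z⟩)
    have hxS' : (⟨x, hx⟩ : TruncV Q d K L) ∈ FiltX Q d K S' :=
      hsub (hle (repX_subset_filtX Q d S hxS))
    have := hg S' hS' hxS'
    rw [hxS] at this
    rw [← this]
    exact hsub

theorem gamma_one_iff_unique (x : RepSpace Q d K) (hx : x ∈ TruncRepVar Q d K L) :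
    gammaCount Q d K L (TruncRepVar Q d K L) x = 1 ↔
      ∀ (S' : Fin (L+1) → Fin Q.n → ℕ) (F : Fin (L+2) → Submodule K (Carrier Q d K)),
        (∃ y ∈ TruncRepVar Q d K L, radLayering Q d K L y = S') →
        Governed Q d K L x S' F → ∀ l : Fin (L+2), F l = radPow Q d K x (l : ℕ) := by
  rw [gamma_eq_one_iff Q d x hx]
  constructor
  · intro h S' F hS' hF l
    have := h S' hS' ⟨F, hF⟩
    subst this
    apply eq_of_vdim_eq Q d (radPow_le_governed Q d hF l) (map_proj_radPow Q d x l)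
    intro i
    exact (vdim_eq_of_governed Q d hF (governed_rad Q d x hx) l i).symm
  · rintro h S' hS' ⟨F, hF⟩
    have hFl := h S' F hS' hF
    funext l i
    have := hF.2.2.2.2.2 l i
    rw [hFl, hFl] at this
    simp only [Fin.val_castSucc, Fin.val_succ] at this
    simp only [radLayering]
    omega

end Rad

end QuiverData

open QuiverData in
/-- For a truncated path algebra `Λ`: (1) the map `x ↦ Γ(M_x)`
(counting the realizable semisimple sequences governing some filtration of `M_x`) is
upper semicontinuous on `Rep_d(Λ)`; (2) for a realizable `d`-dimensional semisimple
sequence `S`, the following are equivalent: (i) the closure of `Rep S` is an irreducible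
component of `Rep_d(Λ)`; (ii) some point `x` of `Rep S` has `Γ(M_x) = 1`; (iii) some
module `G` with radical layering `S` admits the radical filtration as its only
filtration governed by a realizable semisimple sequence. (Stated as (i) ↔ (ii) and
(ii) ↔ (iii).) -/
theorem statement_17 (K : Type) [Field K] [IsAlgClosed K]
    (Q : QuiverData) (L : ℕ) (hL : 0 < L) (d : Fin Q.n → ℕ) :
    (∀ m : ℕ, IsClosed {x : TruncV Q d K L |
        m ≤ gammaCount Q d K L (TruncRepVar Q d K L) x.1}) ∧
    ∀ S : Fin (L+1) → Fin Q.n → ℕ, hasDimVec S d →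
      (∃ x ∈ TruncRepVar Q d K L, radLayering Q d K L x = S) →
      (((closure {x : TruncV Q d K L | radLayering Q d K L x.1 = S}
            ∈ irreducibleComponents (TruncV Q d K L))
          ↔ ∃ x ∈ TruncRepVar Q d K L, radLayering Q d K L x = S ∧
              gammaCount Q d K L (TruncRepVar Q d K L) x = 1) ∧
        ((∃ x ∈ TruncRepVar Q d K L, radLayering Q d K L x = S ∧
              gammaCount Q d K L (TruncRepVar Q d K L) x = 1)
          ↔ ∃ x ∈ TruncRepVar Q d K L, radLayering Q d K L x = S ∧
              ∀ (S' : Fin (L+1) → Fin Q.n → ℕ)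
                (F : Fin (L+2) → Submodule K (Carrier Q d K)),
                (∃ y ∈ TruncRepVar Q d K L, radLayering Q d K L y = S') →
                Governed Q d K L x S' F →
                ∀ l : Fin (L+2), F l = radPow Q d K x (l : ℕ))) := by
  refine ⟨fun m => gamma_closed Q d m, fun S _ hS => ⟨component_iff Q d hS, ?_⟩⟩
  constructor
  · rintro ⟨x, hx, hxS, hg⟩
    exact ⟨x, hx, hxS, (gamma_one_iff_unique Q d x hx).1 hg⟩
  · rintro ⟨x, hx, hxS, hg⟩
    exact ⟨x, hx, hxS, (gamma_one_iff_unique Q d x hx).2 hg⟩
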